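/- Suppose the invertible RDS φ on 𝕊¹ is compressible and has no deterministic fixed points; this holds if and only if φ is contractible and has reverse-minimal dynamics; and in these cases φ is stably synchronising. -/

import Mathlib

open MeasureTheory Filter Topology Set ENNReal

noncomputable section

/-- The natural projection `π : ℝ → 𝕊¹ = ℝ/ℤ`. -/
def circleProj (x : ℝ) : UnitAddCircle := (x : UnitAddCircle)

/-- `f` is an orientation-preserving homeomorphism of the circle: it admits a strictly
monotone degree-one lift. -/
def OrientPreserving (f : UnitAddCircle ≃ₜ UnitAddCircle) : Prop :=
  ∃ F : ℝ → ℝ, StrictMono F ∧ (∀ x : ℝ, F (x + 1) = F x + 1) ∧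
    ∀ x : ℝ, f (circleProj x) = circleProj (F x)

/-- The anticlockwise distance `d₊(x,y) = min {r ≥ 0 : π(x' + r) = y}` (`x'` any lift of `x`). -/
def dPlus (x y : UnitAddCircle) : ℝ :=
  sInf {r : ℝ | 0 ≤ r ∧ ∃ x' : ℝ, circleProj x' = x ∧ circleProj (x' + r) = y}

/-- An invertible random dynamical system on the circle, in discrete or continuous time,
driven by a stationary memoryless noise process. -/
structure RDS (Ω : Type) [m : MeasurableSpace Ω] where
  /-- the time set `𝕋⁺`: either `ℕ ∪ {0}` or `[0,∞)`, viewed inside `ℝ` -/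
  T : Set ℝ
  T_cases : T = Set.range (fun n : ℕ => (n : ℝ)) ∨ T = Set.Ici (0 : ℝ)
  /-- the filtration -/
  F : ℝ → MeasurableSpace Ω
  F_le : ∀ t ∈ T, F t ≤ m
  F_mono : ∀ s ∈ T, ∀ t ∈ T, s ≤ t → F s ≤ F t
  /-- the probability measure -/
  P : Measure Ω
  P_prob : IsProbabilityMeasure P
  /-- the time-shift maps on the noise space -/
  θ : ℝ → Ω → Ω
  θ_zero : θ 0 = id
  θ_add : ∀ s ∈ T, ∀ t ∈ T, θ (s + t) = θ t ∘ θ s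
  θ_preserving : ∀ t ∈ T, MeasurePreserving (θ t) P P
  θ_adapted : ∀ s ∈ T, ∀ t ∈ T, @Measurable Ω Ω (F (s + t)) (F s) (θ t)
  θ_indep : ∀ t ∈ T, ∀ E A : Set Ω, MeasurableSet[F t] E →
    MeasurableSet[⨆ s ∈ T, F s] A → P (E ∩ θ t ⁻¹' A) = P E * P A
  /-- the random homeomorphisms -/
  φ : ℝ → Ω → UnitAddCircle ≃ₜ UnitAddCircle
  φ_orient : ∀ t ∈ T, ∀ ω, OrientPreserving (φ t ω)
  φ_meas : ∀ t ∈ T, @Measurable (Ω × UnitAddCircle) UnitAddCircle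
    ((F t).prod inferInstance) inferInstance (fun p => φ t p.1 p.2)
  φ_zero : ∀ ω, φ 0 ω = Homeomorph.refl UnitAddCircle
  φ_cocycle : ∀ s ∈ T, ∀ t ∈ T, ∀ ω x, φ (s + t) ω x = φ t (θ s ω) (φ s ω x)
  φ_cadlag_right : ∀ ω, ∀ t ∈ T, ∀ tn : ℕ → ℝ, (∀ n, tn n ∈ T) → Antitone tn →
    Tendsto tn atTop (𝓝 t) → ∀ (xn : ℕ → UnitAddCircle) (x : UnitAddCircle),
      Tendsto xn atTop (𝓝 x) →
      Tendsto (fun n => φ (tn n) ω (xn n)) atTop (𝓝 (φ t ω x))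
  /-- the left-limit maps -/
  φ_left_lim : ℝ → Ω → UnitAddCircle → UnitAddCircle
  φ_cadlag_left : ∀ ω, ∀ t ∈ T, ∀ tn : ℕ → ℝ, (∀ n, tn n ∈ T) → StrictMono tn →
    Tendsto tn atTop (𝓝 t) → ∀ (xn : ℕ → UnitAddCircle) (x : UnitAddCircle),
      Tendsto xn atTop (𝓝 x) →
      Tendsto (fun n => φ (tn n) ω (xn n)) atTop (𝓝 (φ_left_lim t ω x))

/-- A probability measure on the circle is atomless if every singleton is null. -/
def Atomless (ρ : Measure UnitAddCircle) : Prop := ∀ x, ρ {x} = 0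

/-- A measure on the circle has full support. -/
def FullSupport (ρ : Measure UnitAddCircle) : Prop :=
  ∀ U : Set UnitAddCircle, IsOpen U → U.Nonempty → 0 < ρ U

/-- The (topological) support of a measure on the circle. -/
def msupport (ρ : Measure UnitAddCircle) : Set UnitAddCircle :=
  {x | ∀ U : Set UnitAddCircle, IsOpen U → x ∈ U → 0 < ρ U}

namespace RDS

variable {Ω : Type} [m : MeasurableSpace Ω] (S : RDS Ω)

/-- the future σ-algebra `𝓕₊ = σ(𝓕_t : t ∈ 𝕋⁺)`. -/
def Fplus : MeasurableSpace Ω := ⨆ t ∈ S.T, S.F t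

/-- The filter "t → ∞ along the time set 𝕋⁺". -/
def tFilter : Filter ℝ := atTop ⊓ 𝓟 S.T

/-- two-point contractibility. -/
def Contractible : Prop := ∀ x y : UnitAddCircle, x ≠ y →
  0 < S.P {ω | ∃ t ∈ S.T, dist (S.φ t ω x) (S.φ t ω y) < dist x y}

/-- compressibility. -/
def Compressible : Prop := ∀ x y : UnitAddCircle, x ≠ y →
  0 < S.P {ω | ∃ t ∈ S.T, dPlus (S.φ t ω x) (S.φ t ω y) < dPlus x y}

/-- `p` is a deterministic fixed point. -/
def DetFixedPoint (p : UnitAddCircle) : Prop :=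
  ∀ᵐ ω ∂S.P, ∀ t ∈ S.T, S.φ t ω p = p

/-- `A` is forward-invariant. -/
def ForwardInvariant (A : Set UnitAddCircle) : Prop :=
  ∀ᵐ ω ∂S.P, ∀ t ∈ S.T, ⇑(S.φ t ω) '' A ⊆ A

/-- reverse-minimal dynamics: the only open forward-invariant sets are `∅` and `𝕊¹`. -/
def ReverseMinimal : Prop :=
  ∀ A : Set UnitAddCircle, IsOpen A → S.ForwardInvariant A → A = ∅ ∨ A = Set.univ

/-- synchronisation. -/
def Synchronising : Prop := ∀ x y : UnitAddCircle,
  S.P {ω | Tendsto (fun t => dist (S.φ t ω x) (S.φ t ω y)) S.tFilter (𝓝 0)} = 1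

/-- everywhere local stability. -/
def EverywhereLocallyStable : Prop := ∀ x : UnitAddCircle,
  S.P {ω | ∃ U : Set UnitAddCircle, IsOpen U ∧ x ∈ U ∧
    Tendsto (fun t => volume (⇑(S.φ t ω) '' U)) S.tFilter (𝓝 0)} = 1

/-- stable synchronisation. -/
def StablySynchronising : Prop := S.Synchronising ∧ S.EverywhereLocallyStable

/-- `ρ` is reverse-stationary: `ρ(A) = ∫ ρ(φ(t,ω)A) ℙ(dω)` for all `t ∈ 𝕋⁺`, Borel `A`. -/
def ReverseStationary (ρ : Measure UnitAddCircle) : Prop :=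
  ∀ t ∈ S.T, ∀ A : Set UnitAddCircle, MeasurableSet A →
    ρ A = ∫⁻ ω, ρ (⇑(S.φ t ω) '' A) ∂S.P

/-- `r` is a crack point of `ω`. -/
def CrackPoint (ω : Ω) (r : UnitAddCircle) : Prop :=
  ∀ G : Set UnitAddCircle, IsClosed G → r ∉ G →
    Tendsto (fun t => volume (⇑(S.φ t ω) '' G)) S.tFilter (𝓝 0)

/-- the set of contractive sample points. -/
def Ωc : Set Ω := {ω | ∃ r, S.CrackPoint ω r}

/-- the reverse transition probabilities `φ̄ₓᵗ(A) = ℙ(ω : φ(t,ω)⁻¹(x) ∈ A)`. -/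
def revTrans (t : ℝ) (x : UnitAddCircle) (A : Set UnitAddCircle) : ℝ≥0∞ :=
  S.P {ω | (S.φ t ω).symm x ∈ A}

/-- the forward transition probabilities `φₓᵗ(A) = ℙ(ω : φ(t,ω)x ∈ A)`. -/
def fwdTrans (t : ℝ) (x : UnitAddCircle) (A : Set UnitAddCircle) : ℝ≥0∞ :=
  S.P {ω | S.φ t ω x ∈ A}

/-- `ρ` is stationary for a transition family `ν`. -/
def StationaryFor (ν : ℝ → UnitAddCircle → Set UnitAddCircle → ℝ≥0∞)
    (ρ : Measure UnitAddCircle) : Prop :=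
  ∀ t ∈ S.T, ∀ A : Set UnitAddCircle, MeasurableSet A → ρ A = ∫⁻ x, ν t x A ∂ρ

/-- `ρ` is ergodic for a transition family `ν`. -/
def ErgodicFor (ν : ℝ → UnitAddCircle → Set UnitAddCircle → ℝ≥0∞)
    (ρ : Measure UnitAddCircle) : Prop :=
  S.StationaryFor ν ρ ∧ ∀ A : Set UnitAddCircle, MeasurableSet A →
    (∀ t ∈ S.T, ∀ᵐ x ∂ρ, x ∈ A → ν t x A = 1) → ρ A = 0 ∨ ρ A = 1

end RDS

/-!
Averaging over the commuting reverse transition kernels (Markov–Kakutani) produces a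
reverse-stationary probability measure `ρ`. If `φ` has reverse-minimal dynamics, then `ρ` has no
atoms and full support: neither the complement of the support nor that of the finite set of
heaviest atoms can be a nontrivial invariant open set. The `ρ`-mass of the image of an arc is then
a martingale, and the smaller one of the masses of two complementary arcs is a bounded
nonnegative supermartingale `V` that depends continuously on the two endpoints and vanishes exactly
where they coincide. The limit of its expectation is upper semicontinuous and attains its maximum on
a closed invariant set, which contains a point of the diagonal if `φ` is contractible; so the limit
is `0`, and `V` tends to `0` almost surely. This gives synchronisation; by the maximal inequality,
short arcs are unlikely ever to reach mass `1/2`, which gives local stability; and along an arc that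
never gets shorter the expectation of `V` would stay bounded away from `0`, which gives
compressibility.

Conversely, in a compressible system the complement of a maximal arc of an invariant open set
cannot shrink, so an invariant open set misses at most one point, and a missed point is a
deterministic fixed point.
-/

/-! ### The circle -/

section Circle

open Metric

variable {x y u v : UnitAddCircle}

lemma dPlus_eq_of_coe {r : ℝ} (hr : r ∈ Ico (0 : ℝ) 1) (h : (r : UnitAddCircle) = y - x) :
    dPlus x y = r := by
  refine IsLeast.csInf_eq ⟨⟨hr.1, ?_⟩, ?_⟩
  · obtain ⟨a, rfl⟩ := QuotientAddGroup.mk_surjective x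
    exact ⟨a, rfl, by simp [circleProj, h]⟩
  · rintro s ⟨hs, a, rfl, rfl⟩
    obtain ⟨n, hn⟩ : ∃ n : ℤ, s - r = n := by
      have h_zero : ((s - r : ℝ) : UnitAddCircle) = 0 := by
        rw [AddCircle.coe_sub, h]
        simp [circleProj]
      obtain ⟨n, hn⟩ := (AddCircle.coe_eq_zero_iff 1).1 h_zero
      exact ⟨n, by simpa using hn.symm⟩
    have hn_nonneg : 0 ≤ n := by
      have : (-1 : ℝ) < n := by linarith [hr.2]
      exact_mod_cast (by exact_mod_cast this : (-1 : ℤ) < n)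
    have : (0 : ℝ) ≤ n := by exact_mod_cast hn_nonneg
    linarith

lemma dPlus_eq_equivIco (x y : UnitAddCircle) :
    dPlus x y = (AddCircle.equivIco (1 : ℝ) 0 (y - x) : ℝ) :=
  dPlus_eq_of_coe (by simpa using (AddCircle.equivIco (1 : ℝ) 0 (y - x)).2)
    ((AddCircle.equivIco (1 : ℝ) 0).symm_apply_apply (y - x))

lemma coe_dPlus (x y : UnitAddCircle) : (dPlus x y : UnitAddCircle) = y - x := by
  rw [dPlus_eq_equivIco]
  exact (AddCircle.equivIco (1 : ℝ) 0).symm_apply_apply (y - x)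

lemma dPlus_mem_Ico (x y : UnitAddCircle) : dPlus x y ∈ Ico (0 : ℝ) 1 := by
  rw [dPlus_eq_equivIco]
  simpa using (AddCircle.equivIco (1 : ℝ) 0 (y - x)).2

lemma dPlus_inj : dPlus x u = dPlus x v ↔ u = v := by
  refine ⟨fun h ↦ ?_, fun h ↦ h ▸ rfl⟩
  simpa [coe_dPlus] using congrArg ((↑) : ℝ → UnitAddCircle) h

lemma dPlus_self (x : UnitAddCircle) : dPlus x x = 0 :=
  dPlus_eq_of_coe (by simp) (by simp)

lemma dPlus_pos (h : x ≠ y) : 0 < dPlus x y :=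
  (dPlus_mem_Ico x y).1.lt_of_ne fun h₀ ↦ h (dPlus_inj.1 ((dPlus_self x).trans h₀))

lemma dPlus_swap (h : x ≠ y) : dPlus y x = 1 - dPlus x y := by
  have hpos := dPlus_pos h
  have hlt := (dPlus_mem_Ico x y).2
  refine dPlus_eq_of_coe ⟨by linarith, by linarith⟩ ?_
  rw [AddCircle.coe_sub, AddCircle.coe_period, coe_dPlus, zero_sub, neg_sub]

lemma dist_eq_min_dPlus (x y : UnitAddCircle) :
    dist x y = min (dPlus x y) (1 - dPlus x y) := by
  have hd := dPlus_mem_Ico x y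
  rw [dist_comm, dist_eq_norm, ← coe_dPlus, UnitAddCircle.norm_eq, abs_sub_round_eq_min,
    Int.fract_eq_self.2 hd]

lemma dist_le_dPlus (x y : UnitAddCircle) : dist x y ≤ dPlus x y :=
  (dist_eq_min_dPlus x y).trans_le (min_le_left _ _)

lemma continuousAt_dPlus {z : UnitAddCircle × UnitAddCircle} (h : z.1 ≠ z.2) :
    ContinuousAt (fun p : UnitAddCircle × UnitAddCircle ↦ dPlus p.1 p.2) z := by
  simp_rw [dPlus_eq_equivIco]
  have h_sub : ContinuousAt (fun p : UnitAddCircle × UnitAddCircle ↦ p.2 - p.1) z := by fun_prop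
  have h_Ico : ContinuousAt (AddCircle.equivIco (1 : ℝ) 0) (z.2 - z.1) :=
    AddCircle.continuousAt_equivIco _ _ (by simpa [sub_eq_zero] using h.symm)
  exact continuousAt_subtype_val.comp (ContinuousAt.comp_of_eq h_Ico h_sub rfl)

lemma measurable_dPlus : Measurable fun p : UnitAddCircle × UnitAddCircle ↦ dPlus p.1 p.2 := by
  simp_rw [dPlus_eq_equivIco]
  exact measurable_subtype_coe.comp
    ((AddCircle.measurableEquivIco 1 0).measurable.comp (measurable_snd.sub measurable_fst))

/-- The open arc swept out when travelling anticlockwise from `x` to `y`; it is empty for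
`x = y`. -/
def arc (x y : UnitAddCircle) : Set UnitAddCircle := {u | dPlus x u ∈ Ioo 0 (dPlus x y)}

lemma arc_self (x : UnitAddCircle) : arc x x = ∅ := by
  ext u
  simp only [arc, dPlus_self, Ioo_self, mem_ofPred_eq, mem_empty_iff_false]

lemma measurableSet_arc_prod :
    MeasurableSet {p : (UnitAddCircle × UnitAddCircle) × UnitAddCircle |
      p.2 ∈ arc p.1.1 p.1.2} := by
  have h_left : Measurable fun p : (UnitAddCircle × UnitAddCircle) × UnitAddCircle ↦
      dPlus p.1.1 p.2 :=
    measurable_dPlus.comp ((measurable_fst.comp measurable_fst).prodMk measurable_snd)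
  have h_ends : Measurable fun p : (UnitAddCircle × UnitAddCircle) × UnitAddCircle ↦
      dPlus p.1.1 p.1.2 := measurable_dPlus.comp measurable_fst
  exact (measurableSet_lt measurable_const h_left).inter (measurableSet_lt h_left h_ends)

lemma arc_eq_ball (x y : UnitAddCircle) :
    arc x y = ball (x + ((dPlus x y / 2 : ℝ) : UnitAddCircle)) (dPlus x y / 2) := by
  ext u
  have hd := dPlus_mem_Ico x y
  have hu := dPlus_mem_Ico x u
  set d := dPlus x y
  set e := dPlus x u with he
  have h_dist : dist u (x + ((d / 2 : ℝ) : UnitAddCircle)) = |e - d / 2 - round (e - d / 2)| := by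
    rw [← UnitAddCircle.norm_eq, dist_eq_norm, AddCircle.coe_sub, he, coe_dPlus, sub_add_eq_sub_sub]
  rw [mem_ball, h_dist]
  refine ⟨fun h ↦ ?_, fun h ↦ ?_⟩
  · refine (round_le (e - d / 2) 0).trans_lt ?_
    have := h.1
    have := h.2
    rw [Int.cast_zero, sub_zero, abs_lt]
    constructor <;> linarith
  · obtain ⟨h_lo, h_hi⟩ := abs_lt.1 h
    have h_round : round (e - d / 2) = 0 := by
      have h_lt_one : (round (e - d / 2) : ℝ) < 1 := by linarith [hu.2]
      have h_gt_neg_one : ((-1 : ℤ) : ℝ) < round (e - d / 2) := by push_cast; linarith [hu.1, hd.2]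
      have := Int.cast_lt.1 h_gt_neg_one
      have : round (e - d / 2) < 1 := by exact_mod_cast h_lt_one
      lia
    rw [h_round, Int.cast_zero] at h_lo h_hi
    exact ⟨by linarith, by linarith⟩

lemma isOpen_arc (x y : UnitAddCircle) : IsOpen (arc x y) := by
  rw [arc_eq_ball]
  exact isOpen_ball

lemma volume_arc_le (x y : UnitAddCircle) : volume (arc x y) ≤ ENNReal.ofReal (dPlus x y) := by
  rw [arc_eq_ball]
  refine (measure_mono ball_subset_closedBall).trans ?_
  rw [AddCircle.volume_closedBall]
  exact ENNReal.ofReal_le_ofReal ((min_le_right _ _).trans (by linarith))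

lemma arc_subset_closedBall (x y : UnitAddCircle) : arc x y ⊆ closedBall x (dPlus x y) :=
  fun u hu ↦ mem_closedBall'.2 ((dist_le_dPlus x u).trans hu.2.le)

lemma compl_pair_subset_arc_union_arc (h : x ≠ y) : {x, y}ᶜ ⊆ arc x y ∪ arc y x := by
  intro u hu
  obtain ⟨hux, huy⟩ : u ≠ x ∧ u ≠ y := by simpa using hu
  rcases lt_or_gt_of_ne (dPlus_inj.not.2 huy : dPlus x u ≠ dPlus x y) with hlt | hgt
  · exact .inl ⟨dPlus_pos hux.symm, hlt⟩
  · have hyu : dPlus y u = dPlus x u - dPlus x y := by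
      refine dPlus_eq_of_coe ⟨by linarith, ?_⟩ (by simp [coe_dPlus])
      linarith [(dPlus_mem_Ico x y).1, (dPlus_mem_Ico x u).2]
    refine .inr ⟨dPlus_pos huy.symm, ?_⟩
    rw [hyu, dPlus_swap h]
    linarith [(dPlus_mem_Ico x u).2]

lemma dPlus_sub_add {r : ℝ} (hr₀ : 0 ≤ r) (hr : r < 1 / 2) (c : UnitAddCircle) :
    dPlus (c - r) (c + r) = 2 * r :=
  dPlus_eq_of_coe ⟨by linarith, by linarith⟩ (by rw [two_mul, AddCircle.coe_add]; abel)

lemma arc_sub_add {r : ℝ} (hr₀ : 0 ≤ r) (hr : r < 1 / 2) (c : UnitAddCircle) :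
    arc (c - r) (c + r) = ball c r := by
  rw [arc_eq_ball, dPlus_sub_add hr₀ hr, mul_div_cancel_left₀ r two_ne_zero, sub_add_cancel]

lemma eq_of_half_le_dist (hu : 1 / 2 ≤ dist x u) (hv : 1 / 2 ≤ dist x v) : u = v := by
  rw [dist_eq_min_dPlus, le_min_iff] at hu hv
  exact dPlus_inj.1 (by linarith : dPlus x u = dPlus x v)

lemma exists_le_infDist_of_arc_subset {A : Set UnitAddCircle} (hA : Aᶜ.Nonempty)
    (h : arc x y ⊆ A) : ∃ c, dPlus x y / 2 ≤ infDist c Aᶜ := by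
  rw [arc_eq_ball] at h
  refine ⟨x + ((dPlus x y / 2 : ℝ) : UnitAddCircle), (le_infDist hA).2 fun p hp ↦ ?_⟩
  by_contra! h_lt
  exact hp (h (mem_ball'.2 h_lt))

lemma exists_maximal_arc_subset {A : Set UnitAddCircle} (hA : IsOpen A) (hA_ne : A.Nonempty)
    (hA_compl : Aᶜ.Nontrivial) :
    ∃ x y, x ≠ y ∧ arc x y ⊆ A ∧ ∀ u v, arc u v ⊆ A → dPlus u v ≤ dPlus x y := by
  obtain ⟨c, -, hc⟩ := isCompact_univ.exists_isMaxOn univ_nonempty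
    (continuous_infDist_pt Aᶜ).continuousOn
  obtain ⟨a, ha⟩ := hA_ne
  obtain ⟨p, hp, q, hq, hpq⟩ := hA_compl
  have h_pos : 0 < infDist c Aᶜ :=
    ((hA.isClosed_compl.notMem_iff_infDist_pos ⟨p, hp⟩).1 (notMem_compl_iff.2 ha)).trans_le
      (hc (mem_univ a))
  have h_half : infDist c Aᶜ < 1 / 2 := by
    by_contra! h_ge
    exact hpq (eq_of_half_le_dist (h_ge.trans (infDist_le_dist_of_mem hp))
      (h_ge.trans (infDist_le_dist_of_mem hq)))
  have h_length := dPlus_sub_add h_pos.le h_half c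
  refine ⟨c - infDist c Aᶜ, c + infDist c Aᶜ, fun h_eq ↦ ?_, ?_, fun u v huv ↦ ?_⟩
  · rw [h_eq, dPlus_self] at h_length
    linarith
  · rw [arc_sub_add h_pos.le h_half]
    exact disjoint_compl_right_iff_subset.1 disjoint_ball_infDist
  · obtain ⟨d, hd⟩ := exists_le_infDist_of_arc_subset ⟨p, hp⟩ huv
    rw [h_length]
    linarith [hd.trans (hc (mem_univ d))]

end Circle

namespace OrientPreserving

variable {f : UnitAddCircle ≃ₜ UnitAddCircle}

lemma dPlus_lt_dPlus_iff (hf : OrientPreserving f) (x u v : UnitAddCircle) :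
    dPlus (f x) (f u) < dPlus (f x) (f v) ↔ dPlus x u < dPlus x v := by
  obtain ⟨F, hF, hF_one, hfF⟩ := hf
  obtain ⟨a, rfl⟩ := QuotientAddGroup.mk_surjective x
  have h_image (w : UnitAddCircle) : dPlus (f a) (f w) = F (a + dPlus a w) - F a := by
    have hw := dPlus_mem_Ico (a : UnitAddCircle) w
    have h_lift : w = circleProj (a + dPlus a w) := by simp [circleProj, coe_dPlus]
    refine dPlus_eq_of_coe ⟨?_, ?_⟩ ?_
    · exact sub_nonneg.2 (hF.monotone (by linarith [hw.1]))
    · rw [sub_lt_iff_lt_add', ← hF_one]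
      exact hF (by linarith [hw.2])
    · have h_left : f a = circleProj (F a) := hfF a
      have h_right : f w = circleProj (F (a + dPlus a w)) := by rw [← hfF, ← h_lift]
      rw [AddCircle.coe_sub, h_left, h_right, circleProj, circleProj]
  change dPlus (f a) _ < dPlus (f a) _ ↔ _
  rw [h_image, h_image, sub_lt_sub_iff_right, hF.lt_iff_lt, add_lt_add_iff_left]

lemma image_arc (hf : OrientPreserving f) (x y : UnitAddCircle) :
    f '' arc x y = arc (f x) (f y) := by
  have h_pos (u : UnitAddCircle) : 0 < dPlus (f x) (f u) ↔ 0 < dPlus x u := by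
    simpa only [dPlus_self] using hf.dPlus_lt_dPlus_iff x x u
  ext w
  obtain ⟨u, rfl⟩ := f.surjective w
  rw [f.injective.mem_set_image]
  exact (and_congr (h_pos u) (hf.dPlus_lt_dPlus_iff x u y)).symm

end OrientPreserving

/-! ### Measures on compact metric spaces -/

section CompactMetric

open Metric

variable {X : Type*} [PseudoMetricSpace X] [CompactSpace X] [MeasurableSpace X]

lemma exists_forall_measure_ball_lt (μ : Measure X) [μ.OuterRegular] [NullSingletonClass μ]
    {δ : ℝ≥0∞} (hδ : 0 < δ) : ∃ ε > 0, ∀ x, μ (ball x ε) < δ := by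
  have h_nhd (x : X) : ∃ U ⊇ {x}, IsOpen U ∧ μ U < δ :=
    Set.exists_isOpen_lt_of_lt {x} δ (by rwa [measure_singleton])
  choose U hxU hU hUδ using h_nhd
  obtain ⟨ε, hε, h_ball⟩ := lebesgue_number_lemma_of_metric isCompact_univ hU
    fun x _ ↦ mem_iUnion.2 ⟨x, hxU x rfl⟩
  refine ⟨ε, hε, fun x ↦ ?_⟩
  obtain ⟨y, hy⟩ := h_ball x (mem_univ x)
  exact (measure_mono hy).trans_lt (hUδ y)

lemma exists_forall_le_measure_ball (μ : Measure X) [μ.IsOpenPosMeasure] {ε : ℝ} (hε : 0 < ε) :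
    ∃ δ > 0, ∀ x, δ ≤ μ (ball x ε) := by
  obtain ⟨t, -, ht, h_cover⟩ := isCompact_univ (X := X).finite_cover_balls (half_pos hε)
  lift t to Finset X using ht
  refine ⟨t.inf fun y ↦ μ (ball y (ε / 2)),
    (Finset.lt_inf_iff (by simp)).2 fun y _ ↦ measure_ball_pos μ y (half_pos hε), fun x ↦ ?_⟩
  obtain ⟨y, hy, hxy⟩ := mem_iUnion₂.1 (h_cover (mem_univ x))
  refine (Finset.inf_le hy).trans (measure_mono (ball_subset_ball' ?_))
  linarith [mem_ball'.1 hxy]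

end CompactMetric

section Atoms

variable {X : Type*} [MeasurableSpace X] [MeasurableSingletonClass X] (μ : Measure X)
  [IsFiniteMeasure μ]

lemma finite_setOf_le_measure_singleton {c : ℝ≥0∞} (hc : 0 < c) : {x | c ≤ μ {x}}.Finite :=
  Measure.finite_const_le_meas_of_disjoint_iUnion μ hc (fun _ ↦ measurableSet_singleton _)
    (fun _ _ h ↦ disjoint_singleton.2 h) (measure_ne_top _ _)

lemma exists_forall_measure_singleton_le {x : X} (hx : 0 < μ {x}) :
    ∃ y, 0 < μ {y} ∧ ∀ z, μ {z} ≤ μ {y} := by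
  obtain ⟨y, hy, h_max⟩ := (finite_setOf_le_measure_singleton μ hx).exists_maximalFor
    (fun z ↦ μ {z}) _ ⟨x, le_refl (μ {x})⟩
  refine ⟨y, hx.trans_le hy, fun z ↦ ?_⟩
  by_contra! hlt
  exact (h_max (hy.trans hlt.le : μ {x} ≤ μ {z}) hlt.le).not_gt hlt

end Atoms

/-! ### The masses of complementary arcs -/

section ArcMass

variable (ρ : Measure UnitAddCircle)

/-- The `ρ`-mass of the open arc from `z.1` to `z.2`. -/
def arcMass (z : UnitAddCircle × UnitAddCircle) : ℝ≥0∞ := ρ (arc z.1 z.2)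

/-- The smaller one of the masses of the two arcs with endpoints `z.1` and `z.2`; for an
atomless measure of full support it measures how far apart the endpoints are. -/
def minMass (z : UnitAddCircle × UnitAddCircle) : ℝ≥0∞ := min (arcMass ρ z) (arcMass ρ z.swap)

lemma measurable_arcMass [SFinite ρ] : Measurable (arcMass ρ) :=
  measurable_measure_prodMk_left measurableSet_arc_prod

lemma minMass_self (x : UnitAddCircle) : minMass ρ (x, x) = 0 := by
  simp [minMass, arcMass, arc_self]

lemma minMass_le_one [IsProbabilityMeasure ρ] (z : UnitAddCircle × UnitAddCircle) :
    minMass ρ z ≤ 1 :=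
  (min_le_left _ _).trans prob_le_one

section Atomless

variable [NullSingletonClass ρ]

lemma measure_univ_le_arcMass_add_arcMass_swap {z : UnitAddCircle × UnitAddCircle}
    (h : z.1 ≠ z.2) : ρ univ ≤ arcMass ρ z + arcMass ρ z.swap := by
  have h_pair : ρ {z.1, z.2} = 0 := (toFinite _).measure_zero ρ
  calc ρ univ ≤ ρ {z.1, z.2} + ρ {z.1, z.2}ᶜ := by
        rw [← union_compl_self {z.1, z.2}]
        exact measure_union_le _ _
    _ ≤ ρ (arc z.1 z.2 ∪ arc z.2 z.1) := by
        rw [h_pair, zero_add]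
        exact measure_mono (compl_pair_subset_arc_union_arc h)
    _ ≤ arcMass ρ z + arcMass ρ z.swap := measure_union_le _ _

lemma minMass_eq_arcMass [IsProbabilityMeasure ρ] {z : UnitAddCircle × UnitAddCircle}
    (h : z.1 ≠ z.2) (h_half : arcMass ρ z ≤ 2⁻¹) : minMass ρ z = arcMass ρ z := by
  refine min_eq_left (not_lt.1 fun h_lt ↦ ?_)
  have h_sum : arcMass ρ z + arcMass ρ z.swap < 2⁻¹ + 2⁻¹ :=
    ENNReal.add_lt_add_of_le_of_lt (measure_ne_top _ _) h_half (h_lt.trans_le h_half)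
  rw [ENNReal.inv_two_add_inv_two, ← measure_univ (μ := ρ)] at h_sum
  exact h_sum.not_ge (measure_univ_le_arcMass_add_arcMass_swap ρ h)

variable [IsFiniteMeasure ρ]

lemma exists_forall_arcMass_lt {δ : ℝ≥0∞} (hδ : 0 < δ) :
    ∃ ε > 0, ∀ z : UnitAddCircle × UnitAddCircle, dPlus z.1 z.2 < ε → arcMass ρ z < δ := by
  obtain ⟨ε, hε, h_ball⟩ := exists_forall_measure_ball_lt ρ hδ
  refine ⟨ε, hε, fun z hz ↦ (measure_mono ?_).trans_lt (h_ball z.1)⟩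
  exact (arc_subset_closedBall _ _).trans (Metric.closedBall_subset_ball hz)

lemma continuousAt_arcMass {z : UnitAddCircle × UnitAddCircle} (h : z.1 ≠ z.2) :
    ContinuousAt (arcMass ρ) z := by
  refine tendsto_measure_of_ae_tendsto_indicator_of_isFiniteMeasure (𝓝 z)
    (isOpen_arc _ _).measurableSet (fun w ↦ (isOpen_arc w.1 w.2).measurableSet) ?_
  filter_upwards [Measure.ae_ne ρ z.1, Measure.ae_ne ρ z.2] with u hu₁ hu₂
  have h_ends : ContinuousAt (fun w : UnitAddCircle × UnitAddCircle ↦ dPlus w.1 w.2) z :=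
    continuousAt_dPlus h
  have h_left : ContinuousAt (fun w : UnitAddCircle × UnitAddCircle ↦ dPlus w.1 u) z :=
    ContinuousAt.comp (f := fun w : UnitAddCircle × UnitAddCircle ↦ (w.1, u))
      (continuousAt_dPlus hu₁.symm) (by fun_prop)
  rcases lt_or_gt_of_ne (dPlus_inj.not.2 hu₂ : dPlus z.1 u ≠ dPlus z.1 z.2) with hlt | hgt
  · filter_upwards [h_left.eventually_const_lt (dPlus_pos hu₁.symm),
      h_left.eventually_lt h_ends hlt] with w hw₀ hw
    exact iff_of_true ⟨hw₀, hw⟩ ⟨dPlus_pos hu₁.symm, hlt⟩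
  · filter_upwards [h_ends.eventually_lt h_left hgt] with w hw
    exact iff_of_false (fun hu ↦ hw.not_gt hu.2) fun hu ↦ hgt.not_gt hu.2

lemma continuousAt_minMass_diagonal (x : UnitAddCircle) : ContinuousAt (minMass ρ) (x, x) := by
  rw [ContinuousAt, minMass_self, ENNReal.tendsto_nhds_zero]
  intro δ hδ
  obtain ⟨ε, hε, h_small⟩ := exists_forall_arcMass_lt ρ hδ
  have h_dist : ContinuousAt (fun w : UnitAddCircle × UnitAddCircle ↦ dist w.1 w.2) (x, x) := by
    fun_prop
  filter_upwards [h_dist.eventually_lt_const (by simpa using hε)] with w hw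
  rcases eq_or_ne w.1 w.2 with h_eq | h_ne
  · rw [show w = (w.1, w.1) from Prod.ext rfl h_eq.symm, minMass_self]
    exact zero_le
  rw [dist_eq_min_dPlus, ← dPlus_swap h_ne, min_lt_iff] at hw
  exact min_le_iff.2 (hw.imp (fun hw ↦ (h_small w hw).le) fun hw ↦ (h_small w.swap hw).le)

lemma continuous_minMass : Continuous (minMass ρ) := by
  refine continuous_iff_continuousAt.2 fun ⟨x, y⟩ ↦ ?_
  rcases eq_or_ne x y with rfl | hxy
  · exact continuousAt_minMass_diagonal ρ x
  · have h_swap : ContinuousAt (arcMass ρ ∘ Prod.swap) (x, y) :=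
      ContinuousAt.comp (continuousAt_arcMass ρ hxy.symm) continuous_swap.continuousAt
    exact (continuousAt_arcMass ρ hxy).min h_swap

end Atomless

section FullSupport

variable [ρ.IsOpenPosMeasure] {ε : ℝ}

lemma exists_forall_le_arcMass (hε : 0 < ε) :
    ∃ δ > 0, ∀ z : UnitAddCircle × UnitAddCircle, ε ≤ dPlus z.1 z.2 → δ ≤ arcMass ρ z := by
  obtain ⟨δ, hδ, h_ball⟩ := exists_forall_le_measure_ball ρ (half_pos hε)
  refine ⟨δ, hδ, fun z hz ↦ ?_⟩
  rw [arcMass, arc_eq_ball]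
  exact (h_ball _).trans (measure_mono (Metric.ball_subset_ball (by linarith)))

lemma exists_forall_dist_lt_of_minMass_lt (hε : 0 < ε) :
    ∃ δ > 0, ∀ z : UnitAddCircle × UnitAddCircle, minMass ρ z < δ → dist z.1 z.2 < ε := by
  obtain ⟨δ, hδ, h_big⟩ := exists_forall_le_arcMass ρ hε
  refine ⟨δ, hδ, fun z hz ↦ ?_⟩
  contrapose! hz
  exact le_min (h_big z (hz.trans (dist_le_dPlus _ _)))
    (h_big z.swap (hz.trans ((dist_comm _ _).trans_le (dist_le_dPlus _ _))))

lemma arcMass_pos {x y : UnitAddCircle} (h : x ≠ y) : 0 < arcMass ρ (x, y) := by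
  obtain ⟨δ, hδ, h_big⟩ := exists_forall_le_arcMass ρ (dPlus_pos h)
  exact hδ.trans_le (h_big _ le_rfl)

lemma tendsto_volume_arc_of_tendsto_arcMass {ι : Type*} {l : Filter ι}
    {z : ι → UnitAddCircle × UnitAddCircle} (h : Tendsto (fun i ↦ arcMass ρ (z i)) l (𝓝 0)) :
    Tendsto (fun i ↦ volume (arc (z i).1 (z i).2)) l (𝓝 0) := by
  have h_dPlus : Tendsto (fun i ↦ dPlus (z i).1 (z i).2) l (𝓝 0) := by
    refine tendsto_order.2 ⟨fun ε hε ↦ ?_, fun ε hε ↦ ?_⟩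
    · exact .of_forall fun i ↦ hε.trans_le (dPlus_mem_Ico _ _).1
    · obtain ⟨δ, hδ, h_big⟩ := exists_forall_le_arcMass ρ hε
      filter_upwards [h.eventually_lt_const hδ] with i hi
      exact not_le.1 fun h_le ↦ (h_big _ h_le).not_gt hi
  refine tendsto_of_tendsto_of_tendsto_of_le_of_le tendsto_const_nhds ?_ (fun _ ↦ zero_le)
    fun i ↦ volume_arc_le _ _
  simpa using ENNReal.tendsto_ofReal h_dPlus

end FullSupport

end ArcMass

section InverseHomeomorphisms

variable {X : Type*} [MetricSpace X]

lemma symm_mem_iff_forall_exists_dist_lt {K D : Set X} (hK : IsClosed K) (hDK : D ⊆ K)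
    (hKD : K ⊆ closure D) (f : X ≃ₜ X) (x : X) :
    f.symm x ∈ K ↔ ∀ n : ℕ, ∃ d ∈ D, dist (f d) x < 1 / ((n : ℝ) + 1) := by
  refine ⟨fun hx n ↦ ?_, fun hx ↦ ?_⟩
  · have h_cont : ContinuousAt (fun d ↦ dist (f d) x) (f.symm x) := by fun_prop
    obtain ⟨d, hd, hdD⟩ := mem_closure_iff_nhds.1 (hKD hx) _
      (h_cont.eventually_lt_const (by simpa using Nat.one_div_pos_of_nat (n := n)))
    exact ⟨d, hdD, hd⟩
  · choose d hdD hd using hx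
    have h_lim : Tendsto (fun n ↦ f (d n)) atTop (𝓝 x) :=
      tendsto_iff_dist_tendsto_zero.2 <| squeeze_zero (fun _ ↦ dist_nonneg) (fun n ↦ (hd n).le)
        tendsto_one_div_add_atTop_nhds_zero_nat
    have h_symm : Tendsto d atTop (𝓝 (f.symm x)) := by
      simpa [Function.comp_def] using (f.symm.continuous.tendsto x).comp h_lim
    exact hK.mem_of_tendsto h_symm (.of_forall fun n ↦ hDK (hdD n))

lemma measurable_symm_prod {Ω : Type*} [MeasurableSpace Ω] [CompactSpace X] [MeasurableSpace X]
    [BorelSpace X] {ψ : Ω → X ≃ₜ X} (h : Measurable fun p : Ω × X ↦ ψ p.1 p.2) :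
    Measurable fun p : Ω × X ↦ (ψ p.1).symm p.2 := by
  refine measurable_of_isClosed fun K hK ↦ ?_
  obtain ⟨D, hDK, hDc, hD⟩ :=
    (TopologicalSpace.IsSeparable.of_separableSpace K).exists_countable_dense_subset
  have h_preimage : (fun p : Ω × X ↦ (ψ p.1).symm p.2) ⁻¹' K =
      ⋂ n : ℕ, ⋃ d ∈ D, {p : Ω × X | dist (ψ p.1 d) p.2 < 1 / ((n : ℝ) + 1)} := by
    ext p
    simp only [mem_iInter, mem_iUnion₂, exists_prop, mem_ofPred_eq]
    exact symm_mem_iff_forall_exists_dist_lt hK hDK hD (ψ p.1) p.2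
  rw [h_preimage]
  refine .iInter fun n ↦ .biUnion hDc fun d _ ↦ measurableSet_lt (Measurable.dist ?_ ?_) ?_
  · exact h.comp (measurable_fst.prodMk measurable_const)
  · exact measurable_snd
  · exact measurable_const

end InverseHomeomorphisms

/-! ### Invariant measures of commuting Feller kernels -/

section Feller

open ProbabilityTheory
open scoped BoundedContinuousFunction NNReal

variable {X : Type*} [MeasurableSpace X]

/-- The law after one step of the Markov chain with kernel `κ` and initial law `μ`. -/
def nextLaw (κ : Kernel X X) [IsMarkovKernel κ] (μ : ProbabilityMeasure X) :
    ProbabilityMeasure X :=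
  ⟨κ ∘ₘ (μ : Measure X), inferInstance⟩

/-- The average of the laws of the first `n + 1` states of the Markov chain with kernel `κ` and
initial law `μ`. -/
def cesaroLaw (κ : Kernel X X) [IsMarkovKernel κ] (μ : ProbabilityMeasure X) (n : ℕ) :
    ProbabilityMeasure X where
  val := (n + 1 : ℝ≥0∞)⁻¹ • ∑ i ∈ Finset.range (n + 1), ((nextLaw κ)^[i] μ : Measure X)
  property := ⟨by
    simpa [Measure.finsetSum_apply] using ENNReal.inv_mul_cancel (by simp) (by finiteness)⟩

variable {κ η : Kernel X X} [IsMarkovKernel κ] {μ : ProbabilityMeasure X}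

lemma invariant_iff_nextLaw_eq : κ.Invariant μ ↔ nextLaw κ μ = μ :=
  (Subtype.ext_iff (a1 := nextLaw κ μ) (a2 := μ)).symm

lemma comp_sum {Y ι : Type*} [MeasurableSpace Y] (κ : Kernel X Y) (s : Finset ι)
    (ν : ι → Measure X) :
    κ ∘ₘ ∑ i ∈ s, ν i = ∑ i ∈ s, κ ∘ₘ ν i := by
  induction s using Finset.cons_induction with
  | empty => simp
  | cons i s hi ih => rw [Finset.sum_cons, Finset.sum_cons, Measure.comp_add, ih]

lemma comp_cesaroLaw_add (κ : Kernel X X) [IsMarkovKernel κ] (μ : ProbabilityMeasure X) (n : ℕ) :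
    (nextLaw κ (cesaroLaw κ μ n) : Measure X) + (n + 1 : ℝ≥0∞)⁻¹ • (μ : Measure X) =
      cesaroLaw κ μ n + (n + 1 : ℝ≥0∞)⁻¹ • ((nextLaw κ)^[n + 1] μ : Measure X) := by
  have h_next (i : ℕ) : κ ∘ₘ ((nextLaw κ)^[i] μ : Measure X) = (nextLaw κ)^[i + 1] μ := by
    rw [Function.iterate_succ_apply']
    rfl
  change κ ∘ₘ ((n + 1 : ℝ≥0∞)⁻¹ •
      ∑ i ∈ Finset.range (n + 1), ((nextLaw κ)^[i] μ : Measure X)) + _ = (n + 1 : ℝ≥0∞)⁻¹ •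
    ∑ i ∈ Finset.range (n + 1), ((nextLaw κ)^[i] μ : Measure X) + _
  rw [Measure.comp_smul, comp_sum, ← smul_add, ← smul_add, ← Finset.sum_range_succ,
    Finset.sum_range_succ' _ (n + 1), Function.iterate_zero_apply]
  simp_rw [h_next]

lemma invariant_cesaroLaw (h_comm : η ∘ₖ κ = κ ∘ₖ η) (hμ : η.Invariant μ) (n : ℕ) :
    η.Invariant (cesaroLaw κ μ n : Measure X) := by
  have h_iterate (i : ℕ) : η ∘ₘ ((nextLaw κ)^[i] μ : Measure X) = (nextLaw κ)^[i] μ := by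
    induction i with
    | zero => exact hμ
    | succ i ih =>
      rw [Function.iterate_succ_apply']
      change η ∘ₘ (κ ∘ₘ _) = κ ∘ₘ _
      rw [Measure.comp_assoc, h_comm, ← Measure.comp_assoc, ih]
  change η ∘ₘ ((n + 1 : ℝ≥0∞)⁻¹ • ∑ i ∈ Finset.range (n + 1), ((nextLaw κ)^[i] μ : Measure X)) = _
  rw [Measure.comp_smul, comp_sum]
  simp_rw [h_iterate]
  rfl

variable [TopologicalSpace X]

lemma lintegral_le_nndist_zero (μ : Measure X) [IsProbabilityMeasure μ] (f : X →ᵇ ℝ≥0) :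
    ∫⁻ y, f y ∂μ ≤ nndist f 0 := by
  calc ∫⁻ y, f y ∂μ ≤ ∫⁻ _, nndist f 0 ∂μ :=
        lintegral_mono fun y ↦
          ENNReal.coe_le_coe.2 (BoundedContinuousFunction.NNReal.upper_bound f y)
    _ = nndist f 0 := by simp

/-- The Feller property: the kernel acts on bounded continuous functions. -/
def IsFeller (κ : Kernel X X) : Prop := ∀ f : X →ᵇ ℝ≥0, Continuous fun x ↦ ∫⁻ y, f y ∂κ x

variable [CompactSpace X] [BorelSpace X]

lemma IsFeller.continuous_nextLaw (hκ : IsFeller κ) : Continuous (nextLaw κ) := by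
  refine ProbabilityMeasure.continuous_iff_forall_continuous_lintegral.2 fun f ↦ ?_
  have h_fin (x : X) : ∫⁻ y, f y ∂κ x ≠ ∞ := (f.lintegral_lt_top_of_nnreal (κ x)).ne
  let g : X →ᵇ ℝ≥0 := .mkOfCompact ⟨fun x ↦ (∫⁻ y, f y ∂κ x).toNNReal,
    ENNReal.continuousOn_toNNReal.comp_continuous (hκ f) h_fin⟩
  have h_eq (μ : ProbabilityMeasure X) : ∫⁻ y, f y ∂(nextLaw κ μ) = ∫⁻ x, g x ∂μ := by
    refine (Measure.lintegral_bind κ.aemeasurable (by fun_prop)).trans ?_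
    exact lintegral_congr fun x ↦ (ENNReal.coe_toNNReal (h_fin x)).symm
  simp_rw [h_eq]
  exact ProbabilityMeasure.continuous_lintegral_boundedContinuousFunction g

variable [HasOuterApproxClosed X]

lemma IsFeller.isClosed_setOf_invariant (hκ : IsFeller κ) :
    IsClosed {μ : ProbabilityMeasure X | κ.Invariant μ} := by
  simp_rw [invariant_iff_nextLaw_eq]
  exact isClosed_eq hκ.continuous_nextLaw continuous_id

lemma IsFeller.invariant_of_tendsto_cesaroLaw (hκ : IsFeller κ) {l : Filter ℕ} [l.NeBot]
    (hl : l ≤ atTop) {ρ : ProbabilityMeasure X} (hρ : Tendsto (cesaroLaw κ μ) l (𝓝 ρ)) :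
    κ.Invariant ρ := by
  rw [invariant_iff_nextLaw_eq]
  suffices h : (nextLaw κ ρ : Measure X) = ρ from Subtype.ext h
  refine ext_of_forall_lintegral_eq_of_IsFiniteMeasure fun f ↦ ?_
  have h_next : Tendsto (fun n ↦ ∫⁻ x, f x ∂(nextLaw κ (cesaroLaw κ μ n))) l
      (𝓝 (∫⁻ x, f x ∂(nextLaw κ ρ))) :=
    ProbabilityMeasure.tendsto_iff_forall_lintegral_tendsto.1
      ((hκ.continuous_nextLaw.tendsto ρ).comp hρ) f
  have h_self := ProbabilityMeasure.tendsto_iff_forall_lintegral_tendsto.1 hρ f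
  have h_inv : Tendsto (fun n : ℕ ↦ (n + 1 : ℝ≥0∞)⁻¹) l (𝓝 0) := by
    have := (ENNReal.tendsto_inv_nat_nhds_zero.comp (tendsto_add_atTop_nat 1)).mono_left hl
    simpa [Function.comp_def] using this
  have h_error (ν : ℕ → ProbabilityMeasure X) :
      Tendsto (fun n : ℕ ↦ (n + 1 : ℝ≥0∞)⁻¹ * ∫⁻ x, f x ∂(ν n : Measure X)) l (𝓝 0) := by
    have h_bound := ENNReal.Tendsto.mul_const h_inv (b := nndist f 0) (.inr ENNReal.coe_ne_top)
    rw [zero_mul] at h_bound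
    exact tendsto_of_tendsto_of_tendsto_of_le_of_le tendsto_const_nhds h_bound (fun _ ↦ zero_le)
      fun n ↦ mul_le_mul_right (lintegral_le_nndist_zero (ν n) f) _
  have h_left := h_next.add (h_error fun _ ↦ μ)
  have h_right := h_self.add (h_error fun n ↦ (nextLaw κ)^[n + 1] μ)
  rw [add_zero] at h_left h_right
  refine tendsto_nhds_unique h_left (h_right.congr fun n ↦ ?_)
  have := congrArg (fun ν ↦ ∫⁻ x, f x ∂ν) (comp_cesaroLaw_add κ μ n)
  simpa only [lintegral_add_measure, lintegral_smul_measure, smul_eq_mul] using this.symm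

variable [T2Space X]

lemma IsFeller.exists_invariant (hκ : IsFeller κ) (μ : ProbabilityMeasure X) :
    ∃ ρ : ProbabilityMeasure X, κ.Invariant ρ ∧ ∀ η : Kernel X X, [IsMarkovKernel η] → IsFeller η →
      η ∘ₖ κ = κ ∘ₖ η → η.Invariant μ → η.Invariant ρ := by
  obtain ⟨ρ, hρ⟩ : ∃ ρ, Tendsto (cesaroLaw κ μ) (hyperfilter ℕ) (𝓝 ρ) :=
    ⟨_, (Ultrafilter.map (cesaroLaw κ μ) (hyperfilter ℕ)).le_nhds_lim⟩
  refine ⟨ρ, hκ.invariant_of_tendsto_cesaroLaw Nat.hyperfilter_le_atTop hρ, ?_⟩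
  intro η _ hη h_comm hμ
  exact hη.isClosed_setOf_invariant.mem_of_tendsto hρ (.of_forall (invariant_cesaroLaw h_comm hμ))

lemma exists_forall_invariant [Nonempty X] {ι : Type*} {κ : ι → Kernel X X}
    [∀ i, IsMarkovKernel (κ i)] (hκ : ∀ i, IsFeller (κ i))
    (h_comm : ∀ i j, κ i ∘ₖ κ j = κ j ∘ₖ κ i) :
    ∃ ρ : ProbabilityMeasure X, ∀ i, (κ i).Invariant ρ := by
  have h_finite (s : Finset ι) : ∃ ρ : ProbabilityMeasure X, ∀ i ∈ s, (κ i).Invariant ρ := by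
    induction s using Finset.cons_induction with
    | empty => exact ⟨⟨.dirac (Classical.arbitrary X), inferInstance⟩, by simp⟩
    | cons i s hi ih =>
      obtain ⟨μ, hμ⟩ := ih
      obtain ⟨ρ, hρ, h_keep⟩ := (hκ i).exists_invariant μ
      refine ⟨ρ, (Finset.forall_mem_cons hi _).2 ⟨hρ, fun j hj ↦ ?_⟩⟩
      exact h_keep (κ j) (hκ j) (h_comm j i) (hμ j hj)
  obtain ⟨ρ, hρ⟩ := CompactSpace.iInter_nonempty (fun i ↦ (hκ i).isClosed_setOf_invariant)
    fun s ↦ (h_finite s).imp fun ρ hρ ↦ mem_iInter₂.2 hρ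
  exact ⟨ρ, fun i ↦ mem_iInter.1 hρ i⟩

end Feller

namespace RDS

variable {Ω : Type} [m : MeasurableSpace Ω] (S : RDS Ω)

/-! ### The time set and right-continuity -/

section Time

variable {s t : ℝ}

lemma nonneg_of_mem (ht : t ∈ S.T) : 0 ≤ t := by
  rcases S.T_cases with h | h <;> rw [h] at ht
  · obtain ⟨n, rfl⟩ := ht
    exact n.cast_nonneg
  · exact ht

lemma natCast_mem (n : ℕ) : (n : ℝ) ∈ S.T := by
  rcases S.T_cases with h | h <;> rw [h]
  · exact mem_range_self n
  · exact mem_Ici.2 n.cast_nonneg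

lemma zero_mem : (0 : ℝ) ∈ S.T := by
  simpa using S.natCast_mem 0

lemma add_mem (hs : s ∈ S.T) (ht : t ∈ S.T) : s + t ∈ S.T := by
  rcases S.T_cases with h | h <;> rw [h] at hs ht ⊢
  · obtain ⟨a, rfl⟩ := hs
    obtain ⟨b, rfl⟩ := ht
    exact ⟨a + b, by simp⟩
  · exact mem_Ici.2 (add_nonneg (mem_Ici.1 hs) (mem_Ici.1 ht))

lemma sub_mem (hs : s ∈ S.T) (ht : t ∈ S.T) (hst : s ≤ t) : t - s ∈ S.T := by
  rcases S.T_cases with h | h <;> rw [h] at hs ht ⊢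
  · obtain ⟨a, rfl⟩ := hs
    obtain ⟨b, rfl⟩ := ht
    exact ⟨b - a, Nat.cast_sub (Nat.cast_le.1 hst)⟩
  · exact sub_nonneg.2 hst

/-- The rational times, a countable set approximating every time from the right. -/
def ratTimes : Set ℝ := S.T ∩ range ((↑) : ℚ → ℝ)

lemma countable_ratTimes : S.ratTimes.Countable := (countable_range _).mono inter_subset_right

lemma exists_antitone_seq_ratTimes (ht : t ∈ S.T) :
    ∃ u : ℕ → ℝ, (∀ n, u n ∈ S.ratTimes) ∧ Antitone u ∧ Tendsto u atTop (𝓝 t) := by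
  rcases S.T_cases with h | h
  · obtain ⟨k, rfl⟩ := h ▸ ht
    exact ⟨fun _ ↦ k, fun _ ↦ ⟨ht, k, by simp⟩, antitone_const, tendsto_const_nhds⟩
  · obtain ⟨u, hu_anti, hu, hu_lim⟩ :=
      Rat.denseRange_cast.exists_seq_strictAnti_tendsto Rat.cast_strictMono.monotone t
    refine ⟨fun n ↦ u n, fun n ↦ ⟨?_, u n, rfl⟩, fun i j hij ↦ ?_, hu_lim⟩
    · exact h ▸ mem_Ici.2 ((S.nonneg_of_mem ht).trans (hu n).le)
    · exact Rat.cast_le.2 (hu_anti.antitone hij)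

lemma eventually_tFilter_iff {p : ℝ → Prop} :
    (∀ᶠ t in S.tFilter, p t) ↔ ∃ k : ℕ, ∀ t ∈ S.T, (k : ℝ) ≤ t → p t := by
  rw [tFilter, eventually_inf_principal, eventually_atTop]
  refine ⟨fun ⟨a, ha⟩ ↦ ?_, fun ⟨k, hk⟩ ↦ ⟨k, fun t hkt ht ↦ hk t ht hkt⟩⟩
  obtain ⟨k, hk⟩ := exists_nat_ge a
  exact ⟨k, fun t ht hkt ↦ ha t (hk.trans hkt) ht⟩

end Time

section RightContinuity

variable {t : ℝ} {u : ℕ → ℝ}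

lemma tendsto_symm (ω : Ω) (ht : t ∈ S.T) (hu : ∀ n, u n ∈ S.T) (hu_anti : Antitone u)
    (hu_lim : Tendsto u atTop (𝓝 t)) (y : UnitAddCircle) :
    Tendsto (fun n ↦ (S.φ (u n) ω).symm y) atTop (𝓝 ((S.φ t ω).symm y)) := by
  refine tendsto_nhds_of_unique_mapClusterPt fun x hx ↦ ?_
  obtain ⟨k, hk, hk_lim⟩ := hx.tendsto_subseq
  have h_image := S.φ_cadlag_right ω t ht (u ∘ k) (fun n ↦ hu (k n))
    (hu_anti.comp_monotone hk.monotone) (hu_lim.comp hk.tendsto_atTop) _ x hk_lim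
  simp only [Function.comp_apply, Homeomorph.apply_symm_apply] at h_image
  exact (S.φ t ω).eq_symm_apply.2 (tendsto_nhds_unique h_image tendsto_const_nhds)

lemma forwardInvariant_of_forall_ae {A : Set UnitAddCircle} (hA : IsOpen A)
    (h : ∀ t ∈ S.T, ∀ᵐ ω ∂S.P, S.φ t ω '' A ⊆ A) : S.ForwardInvariant A := by
  have h_rat : ∀ᵐ ω ∂S.P, ∀ t ∈ S.ratTimes, S.φ t ω '' A ⊆ A :=
    (ae_ball_iff S.countable_ratTimes).2 fun t ht ↦ h t ht.1
  filter_upwards [h_rat] with ω hω t ht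
  rintro _ ⟨x, hx, rfl⟩
  by_contra hy
  obtain ⟨u, hu, hu_anti, hu_lim⟩ := S.exists_antitone_seq_ratTimes ht
  have h_lim : Tendsto (fun n ↦ (S.φ (u n) ω).symm (S.φ t ω x)) atTop (𝓝 x) := by
    simpa using S.tendsto_symm ω ht (fun n ↦ (hu n).1) hu_anti hu_lim (S.φ t ω x)
  obtain ⟨n, hn⟩ := (h_lim.eventually (hA.mem_nhds hx)).exists
  exact hy (hω (u n) (hu n) ⟨_, hn, by simp⟩)

end RightContinuity

/-! ### The Markov property -/

instance : IsProbabilityMeasure S.P := S.P_prob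

lemma Fplus_le : S.Fplus ≤ m := iSup₂_le S.F_le

variable {S}

lemma F_le_Fplus {t : ℝ} (ht : t ∈ S.T) : S.F t ≤ S.Fplus :=
  le_iSup₂ (f := fun t (_ : t ∈ S.T) ↦ S.F t) t ht

section Markov

variable {α β : Type*} [MeasurableSpace α] [MeasurableSpace β] {s : ℝ} {X : Ω → α} {Y : Ω → β}

lemma map_prodMk_comp_θ (hs : s ∈ S.T) (hX : Measurable[S.F s] X) (hY : Measurable[S.Fplus] Y) :
    S.P.map (fun ω ↦ (X ω, Y (S.θ s ω))) = (S.P.map X).prod (S.P.map Y) := by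
  have hX' : Measurable X := hX.mono (S.F_le s hs) le_rfl
  have hY' : Measurable Y := hY.mono S.Fplus_le le_rfl
  have := Measure.isProbabilityMeasure_map (μ := S.P) hX'.aemeasurable
  have := Measure.isProbabilityMeasure_map (μ := S.P) hY'.aemeasurable
  have h_pair : Measurable fun ω ↦ (X ω, Y (S.θ s ω)) :=
    hX'.prodMk (hY'.comp (S.θ_preserving s hs).measurable)
  refine (Measure.prod_eq fun A B hA hB ↦ ?_).symm
  rw [Measure.map_apply h_pair (hA.prod hB), Measure.map_apply hX' hA, Measure.map_apply hY' hB]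
  exact S.θ_indep s hs (X ⁻¹' A) (Y ⁻¹' B) (hX hA) (hY hB)

lemma lintegral_comp_θ (hs : s ∈ S.T) (hX : Measurable[S.F s] X) (hY : Measurable[S.Fplus] Y)
    {G : α × β → ℝ≥0∞} (hG : Measurable G) :
    ∫⁻ ω, G (X ω, Y (S.θ s ω)) ∂S.P = ∫⁻ ω, ∫⁻ ω', G (X ω, Y ω') ∂S.P ∂S.P := by
  have hX' : Measurable X := hX.mono (S.F_le s hs) le_rfl
  have hY' : Measurable Y := hY.mono S.Fplus_le le_rfl
  have := Measure.isProbabilityMeasure_map (μ := S.P) hY'.aemeasurable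
  calc ∫⁻ ω, G (X ω, Y (S.θ s ω)) ∂S.P
      = ∫⁻ p, G p ∂(S.P.map X).prod (S.P.map Y) := by
        rw [← map_prodMk_comp_θ hs hX hY, lintegral_map hG]
        exact hX'.prodMk (hY'.comp (S.θ_preserving s hs).measurable)
    _ = ∫⁻ a, ∫⁻ b, G (a, b) ∂S.P.map Y ∂S.P.map X := lintegral_prod _ hG.aemeasurable
    _ = ∫⁻ ω, ∫⁻ b, G (X ω, b) ∂S.P.map Y ∂S.P := lintegral_map hG.lintegral_prod_right' hX'
    _ = ∫⁻ ω, ∫⁻ ω', G (X ω, Y ω') ∂S.P ∂S.P :=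
        lintegral_congr fun ω ↦ lintegral_map (hG.comp measurable_prodMk_left) hY'

end Markov

end RDS

namespace RDS

open ProbabilityTheory
open scoped BoundedContinuousFunction NNReal

variable {Ω : Type} [m : MeasurableSpace Ω] {S : RDS Ω} {s t : ℝ}

/-! ### Reverse-stationary measures -/

lemma measurable_symm_F (ht : t ∈ S.T) :
    @Measurable (Ω × UnitAddCircle) UnitAddCircle ((S.F t).prod inferInstance) inferInstance
      fun p ↦ (S.φ t p.1).symm p.2 :=
  @measurable_symm_prod _ _ Ω (S.F t) _ _ _ _ (S.φ_meas t ht)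

lemma measurable_symm (ht : t ∈ S.T) :
    Measurable fun p : Ω × UnitAddCircle ↦ (S.φ t p.1).symm p.2 :=
  (measurable_symm_F ht).mono
    (sup_le_sup (MeasurableSpace.comap_mono (S.F_le t ht)) le_rfl) le_rfl

variable (S) in
/-- The transition kernels `x ↦ law of φ(t,·)⁻¹x` of the reverse one-point motion. -/
def reverseKernel (t : S.T) : Kernel UnitAddCircle UnitAddCircle :=
  (Kernel.const UnitAddCircle S.P ×ₖ Kernel.id).map fun p ↦ (S.φ t p.1).symm p.2

instance (t : S.T) : IsMarkovKernel (S.reverseKernel t) :=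
  Kernel.IsMarkovKernel.map _ (measurable_symm t.2)

lemma lintegral_reverseKernel (t : S.T) {f : UnitAddCircle → ℝ≥0∞} (hf : Measurable f)
    (x : UnitAddCircle) :
    ∫⁻ y, f y ∂S.reverseKernel t x = ∫⁻ ω, f ((S.φ t ω).symm x) ∂S.P := by
  have h_symm : Measurable fun p : Ω × UnitAddCircle ↦ f ((S.φ t p.1).symm p.2) :=
    hf.comp (measurable_symm t.2)
  rw [reverseKernel, Kernel.lintegral_map _ (measurable_symm t.2) _ hf,
    Kernel.lintegral_prod _ _ _ h_symm, Kernel.const_apply]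
  refine lintegral_congr fun ω ↦ ?_
  rw [Kernel.id_apply]
  exact lintegral_dirac' x (h_symm.comp measurable_prodMk_left)

lemma symm_add_apply (hs : s ∈ S.T) (ht : t ∈ S.T) (ω : Ω) (x : UnitAddCircle) :
    (S.φ (s + t) ω).symm x = (S.φ s ω).symm ((S.φ t (S.θ s ω)).symm x) := by
  simp only [Homeomorph.symm_apply_eq, S.φ_cocycle s hs t ht, Homeomorph.apply_symm_apply]

lemma lintegral_symm_add (hs : s ∈ S.T) (ht : t ∈ S.T) {f : UnitAddCircle → ℝ≥0∞}
    (hf : Measurable f) (x : UnitAddCircle) :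
    ∫⁻ ω, f ((S.φ (s + t) ω).symm x) ∂S.P
      = ∫⁻ ω', ∫⁻ ω, f ((S.φ s ω).symm ((S.φ t ω').symm x)) ∂S.P ∂S.P := by
  have h_right : Measurable[S.F t] fun ω ↦ (S.φ t ω).symm x :=
    (measurable_symm_F ht).comp (@measurable_prodMk_right _ _ (S.F t) _ x)
  have h_markov := @lintegral_comp_θ Ω m S Ω UnitAddCircle (S.F s) _ s id _ hs
    (@measurable_id _ (S.F s)) (h_right.mono (F_le_Fplus ht) le_rfl)
    (fun p ↦ f ((S.φ s p.1).symm p.2)) (hf.comp (measurable_symm_F hs))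
  have h_joint : Measurable fun p : Ω × Ω ↦ f ((S.φ s p.1).symm ((S.φ t p.2).symm x)) :=
    hf.comp <| (measurable_symm hs).comp <|
      measurable_fst.prodMk ((h_right.mono (S.F_le t ht) le_rfl).comp measurable_snd)
  simp_rw [symm_add_apply hs ht]
  exact h_markov.trans (lintegral_lintegral_swap h_joint.aemeasurable)

lemma reverseKernel_comp (s t : S.T) :
    S.reverseKernel s ∘ₖ S.reverseKernel t = S.reverseKernel ⟨s + t, S.add_mem s.2 t.2⟩ := by
  refine Kernel.ext_fun fun x f hf ↦ ?_
  rw [Kernel.lintegral_comp _ _ _ hf, lintegral_reverseKernel _ hf,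
    lintegral_symm_add s.2 t.2 hf, lintegral_reverseKernel _ hf.lintegral_kernel]
  simp only [lintegral_reverseKernel _ hf]

lemma isFeller_reverseKernel (t : S.T) : IsFeller (S.reverseKernel t) := fun f ↦ by
  have h_meas : Measurable fun y ↦ (f y : ℝ≥0∞) := f.continuous.measurable.coe_nnreal_ennreal
  simp only [lintegral_reverseKernel t h_meas]
  refine continuous_iff_continuousAt.2 fun x ↦ tendsto_lintegral_filter_of_dominated_convergence
    (fun _ ↦ (nndist f 0 : ℝ≥0∞)) ?_ ?_ (by simp) ?_
  · exact .of_forall fun y ↦ h_meas.comp ((measurable_symm t.2).comp measurable_prodMk_right)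
  · exact .of_forall fun y ↦ .of_forall fun ω ↦
      ENNReal.coe_le_coe.2 (BoundedContinuousFunction.NNReal.upper_bound f _)
  · exact .of_forall fun ω ↦ ENNReal.tendsto_coe.2
      (f.continuous.comp (S.φ t ω).symm.continuous).continuousAt

variable (S) in
lemma exists_reverseStationary :
    ∃ ρ : Measure UnitAddCircle, IsProbabilityMeasure ρ ∧ S.ReverseStationary ρ := by
  have h_comm (s t : S.T) :
      S.reverseKernel s ∘ₖ S.reverseKernel t = S.reverseKernel t ∘ₖ S.reverseKernel s := by
    simp only [reverseKernel_comp, add_comm]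
  obtain ⟨ρ, hρ⟩ := exists_forall_invariant isFeller_reverseKernel h_comm
  refine ⟨ρ, inferInstance, fun t ht A hA ↦ ?_⟩
  have h_ind : Measurable (A.indicator (1 : UnitAddCircle → ℝ≥0∞)) := measurable_one.indicator hA
  have h_joint := h_ind.comp ((measurable_symm ht).comp measurable_swap)
  calc (ρ : Measure UnitAddCircle) A
      = ∫⁻ x, S.reverseKernel ⟨t, ht⟩ x A ∂(ρ : Measure UnitAddCircle) := by
        rw [← Measure.bind_apply hA (Kernel.aemeasurable _), hρ ⟨t, ht⟩]
    _ = ∫⁻ x, ∫⁻ ω, A.indicator 1 ((S.φ t ω).symm x) ∂S.P ∂(ρ : Measure UnitAddCircle) := by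
        simp only [← lintegral_reverseKernel ⟨t, ht⟩ h_ind, lintegral_indicator_one hA]
    _ = ∫⁻ ω, ∫⁻ x, A.indicator 1 ((S.φ t ω).symm x) ∂(ρ : Measure UnitAddCircle) ∂S.P :=
        lintegral_lintegral_swap h_joint.aemeasurable
    _ = ∫⁻ ω, (ρ : Measure UnitAddCircle) (S.φ t ω '' A) ∂S.P := lintegral_congr fun ω ↦ by
        rw [(S.φ t ω).image_eq_preimage_symm,
          ← lintegral_indicator_one ((S.φ t ω).symm.continuous.measurable hA)]
        rfl

end RDS

/-! ### The maximal inequality -/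

section Maximal

variable {Ω ι : Type*} [LinearOrder ι] {m : MeasurableSpace Ω} {μ : Measure Ω}
  {ℱ : Filtration ι m} {Y : ι → Ω → ℝ≥0∞}

lemma mul_measure_exists_finset_ge_le (hY : ∀ t, Measurable[ℱ t] (Y t))
    (h_super : ∀ s t, s ≤ t → ∀ E, MeasurableSet[ℱ s] E →
      ∫⁻ ω in E, Y t ω ∂μ ≤ ∫⁻ ω in E, Y s ω ∂μ)
    (c : ℝ≥0∞) (A : Finset ι) {s : ι} (hs : ∀ t ∈ A, s ≤ t) {E : Set Ω}
    (hE : MeasurableSet[ℱ s] E) :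
    c * μ (E ∩ {ω | ∃ t ∈ A, c ≤ Y t ω}) ≤ ∫⁻ ω in E, Y s ω ∂μ := by
  induction A using Finset.induction_on_min generalizing s E with
  | empty => simp
  | insert a A ha ih =>
    have hsa : s ≤ a := hs a (Finset.mem_insert_self a A)
    have hEa : MeasurableSet[ℱ a] E := ℱ.mono hsa _ hE
    have h_hit : MeasurableSet[ℱ a] {ω | c ≤ Y a ω} := hY a measurableSet_Ici
    have h_now : c * μ (E ∩ {ω | c ≤ Y a ω}) ≤ ∫⁻ ω in E ∩ {ω | c ≤ Y a ω}, Y a ω ∂μ := by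
      rw [← setLIntegral_const]
      exact setLIntegral_mono' (ℱ.le a _ (hEa.inter h_hit)) fun ω hω ↦ hω.2
    have h_later := ih (fun t ht ↦ (ha t ht).le) (hEa.diff h_hit)
    calc c * μ (E ∩ {ω | ∃ t ∈ insert a A, c ≤ Y t ω})
        ≤ c * (μ (E ∩ {ω | c ≤ Y a ω}) + μ (E \ {ω | c ≤ Y a ω} ∩ {ω | ∃ t ∈ A, c ≤ Y t ω})) := by
          gcongr
          refine (measure_mono ?_).trans (measure_union_le _ _)
          rintro ω ⟨hω, h_ex⟩
          by_cases h : c ≤ Y a ω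
          · exact .inl ⟨hω, h⟩
          · exact .inr ⟨⟨hω, h⟩, (Finset.exists_mem_insert _ _ _ |>.1 h_ex).resolve_left h⟩
      _ ≤ (∫⁻ ω in E ∩ {ω | c ≤ Y a ω}, Y a ω ∂μ) + ∫⁻ ω in E \ {ω | c ≤ Y a ω}, Y a ω ∂μ := by
          rw [mul_add]
          exact add_le_add h_now h_later
      _ = ∫⁻ ω in E, Y a ω ∂μ := lintegral_inter_add_sdiff _ _ (ℱ.le a _ h_hit)
      _ ≤ ∫⁻ ω in E, Y s ω ∂μ := h_super s a hsa E hE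

lemma mul_measure_exists_countable_ge_le (hY : ∀ t, Measurable[ℱ t] (Y t))
    (h_super : ∀ s t, s ≤ t → ∀ E, MeasurableSet[ℱ s] E →
      ∫⁻ ω in E, Y t ω ∂μ ≤ ∫⁻ ω in E, Y s ω ∂μ)
    (c : ℝ≥0∞) {D : Set ι} (hD : D.Countable) {s : ι} (hs : ∀ t ∈ D, s ≤ t) :
    c * μ {ω | ∃ t ∈ D, c ≤ Y t ω} ≤ ∫⁻ ω, Y s ω ∂μ := by
  have := hD.to_subtype
  have h_union : {ω | ∃ t ∈ D, c ≤ Y t ω} = ⋃ A : Finset D, {ω | ∃ t ∈ A, c ≤ Y t ω} := by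
    ext ω
    simp only [mem_iUnion, mem_ofPred_eq]
    exact ⟨fun ⟨t, ht, h⟩ ↦ ⟨{⟨t, ht⟩}, ⟨t, ht⟩, Finset.mem_singleton_self _, h⟩,
      fun ⟨_, t, _, h⟩ ↦ ⟨t, t.2, h⟩⟩
  have h_mono : Monotone fun A : Finset D ↦ {ω | ∃ t ∈ A, c ≤ Y t ω} :=
    fun A B hAB ω ⟨t, ht, h⟩ ↦ ⟨t, hAB ht, h⟩
  rw [h_union, h_mono.directed_le.measure_iUnion, ENNReal.mul_iSup]
  refine iSup_le fun A ↦ ?_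
  have h_finite := mul_measure_exists_finset_ge_le hY h_super c (A.map (.subtype _))
    (s := s) (E := univ) (by simpa using fun t ht _ ↦ hs t ht) .univ
  simpa using h_finite

end Maximal

namespace RDS

variable {Ω : Type} [m : MeasurableSpace Ω] {S : RDS Ω} {s t : ℝ}
  {z : UnitAddCircle × UnitAddCircle} {f : UnitAddCircle × UnitAddCircle → ℝ≥0∞}

/-! ### The two-point motion -/

section TwoPoint

variable (S) in
/-- The two-point motion: the pair `z` transported by `φ(t,ω)`. -/
def twoPoint (t : ℝ) (ω : Ω) (z : UnitAddCircle × UnitAddCircle) : UnitAddCircle × UnitAddCircle :=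
  (S.φ t ω z.1, S.φ t ω z.2)

variable (S) in
/-- The transition operators of the two-point motion, acting on functions. -/
def twoPointMean (t : ℝ) (f : UnitAddCircle × UnitAddCircle → ℝ≥0∞)
    (z : UnitAddCircle × UnitAddCircle) : ℝ≥0∞ :=
  ∫⁻ ω, f (S.twoPoint t ω z) ∂S.P

variable (S) in
/-- The infimum of `twoPointMean k f` over integer times `k`; for excessive `f` this is the limit
as `k → ∞`. -/
def infTwoPointMean (f : UnitAddCircle × UnitAddCircle → ℝ≥0∞)
    (z : UnitAddCircle × UnitAddCircle) : ℝ≥0∞ :=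
  ⨅ k : ℕ, S.twoPointMean k f z

lemma continuous_twoPoint (t : ℝ) (ω : Ω) : Continuous (S.twoPoint t ω) :=
  ((S.φ t ω).continuous.comp continuous_fst).prodMk ((S.φ t ω).continuous.comp continuous_snd)

lemma measurable_twoPoint_F (ht : t ∈ S.T) :
    @Measurable (Ω × UnitAddCircle × UnitAddCircle) (UnitAddCircle × UnitAddCircle)
      ((S.F t).prod inferInstance) inferInstance fun p ↦ S.twoPoint t p.1 p.2 := by
  have h_pair {g : Ω → UnitAddCircle → UnitAddCircle} [MeasurableSpace Ω]
      (hg : Measurable fun p : Ω × UnitAddCircle ↦ g p.1 p.2) :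
      Measurable fun p : Ω × UnitAddCircle × UnitAddCircle ↦ (g p.1 p.2.1, g p.1 p.2.2) :=
    (hg.comp (measurable_fst.prodMk measurable_snd.fst)).prodMk
      (hg.comp (measurable_fst.prodMk measurable_snd.snd))
  exact @h_pair (fun ω x ↦ S.φ t ω x) (S.F t) (S.φ_meas t ht)

lemma measurable_twoPoint_left_F (ht : t ∈ S.T) (z : UnitAddCircle × UnitAddCircle) :
    Measurable[S.F t] fun ω ↦ S.twoPoint t ω z :=
  (measurable_twoPoint_F ht).comp (@measurable_prodMk_right _ _ (S.F t) _ z)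

lemma measurable_twoPoint_left (ht : t ∈ S.T) (z : UnitAddCircle × UnitAddCircle) :
    Measurable fun ω ↦ S.twoPoint t ω z :=
  (measurable_twoPoint_left_F ht z).mono (S.F_le t ht) le_rfl

lemma twoPoint_add (hs : s ∈ S.T) (ht : t ∈ S.T) (ω : Ω) (z : UnitAddCircle × UnitAddCircle) :
    S.twoPoint (s + t) ω z = S.twoPoint t (S.θ s ω) (S.twoPoint s ω z) := by
  simp only [twoPoint, S.φ_cocycle s hs t ht]

lemma exists_ratTimes_twoPoint_mem (ht : t ∈ S.T) (ω : Ω) {U : Set (UnitAddCircle × UnitAddCircle)}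
    (hU : U ∈ 𝓝 (S.twoPoint t ω z)) : ∃ u ∈ S.ratTimes, t ≤ u ∧ S.twoPoint u ω z ∈ U := by
  obtain ⟨u, hu, hu_anti, hu_lim⟩ := S.exists_antitone_seq_ratTimes ht
  have h_lim (x : UnitAddCircle) : Tendsto (fun n ↦ S.φ (u n) ω x) atTop (𝓝 (S.φ t ω x)) :=
    S.φ_cadlag_right ω t ht u (fun n ↦ (hu n).1) hu_anti hu_lim _ x tendsto_const_nhds
  obtain ⟨n, hn⟩ := (((h_lim z.1).prodMk_nhds (h_lim z.2)).eventually hU).exists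
  exact ⟨u n, hu n, hu_anti.le_of_tendsto hu_lim n, hn⟩

lemma setLIntegral_twoPoint_add (hs : s ∈ S.T) (ht : t ∈ S.T) (hf : Measurable f)
    {E : Set Ω} (hE : MeasurableSet[S.F s] E) (z : UnitAddCircle × UnitAddCircle) :
    ∫⁻ ω in E, f (S.twoPoint (s + t) ω z) ∂S.P
      = ∫⁻ ω in E, S.twoPointMean t f (S.twoPoint s ω z) ∂S.P := by
  have h_ind (g : Ω → ℝ≥0∞) :
      ∫⁻ ω in E, g ω ∂S.P = ∫⁻ ω, E.indicator (fun _ ↦ 1) ω * g ω ∂S.P := by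
    simp only [← indicator_mul_left, one_mul, lintegral_indicator (S.F_le s hs E hE)]
  have h_past : Measurable[S.F s]
      fun ω ↦ (E.indicator (fun _ ↦ (1 : ℝ≥0∞)) ω, S.twoPoint s ω z) :=
    (measurable_const.indicator hE).prodMk (measurable_twoPoint_left_F hs z)
  have h_integrand {X : Ω → UnitAddCircle × UnitAddCircle → UnitAddCircle × UnitAddCircle}
      [MeasurableSpace Ω] (hX : Measurable fun p : Ω × UnitAddCircle × UnitAddCircle ↦ X p.1 p.2) :
      Measurable fun p : (ℝ≥0∞ × UnitAddCircle × UnitAddCircle) × Ω ↦ p.1.1 * f (X p.2 p.1.2) :=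
    measurable_fst.fst.mul (hf.comp (hX.comp (measurable_snd.prodMk measurable_fst.snd)))
  have h_markov := @lintegral_comp_θ Ω m S _ Ω _ (S.F t) s _ id hs h_past
    (measurable_id'' (F_le_Fplus ht)) _ (@h_integrand _ (S.F t) (measurable_twoPoint_F ht))
  rw [h_ind, h_ind]
  simp_rw [twoPoint_add hs ht]
  refine h_markov.trans (lintegral_congr fun ω ↦ ?_)
  exact lintegral_const_mul _ (hf.comp (measurable_twoPoint_left ht _))

lemma continuous_twoPointMean (ht : t ∈ S.T) (hf : Continuous f) (hf_top : ∀ z, f z ≠ ∞) :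
    Continuous (S.twoPointMean t f) := by
  obtain ⟨w, -, hw⟩ := isCompact_univ.exists_isMaxOn univ_nonempty hf.continuousOn
  refine continuous_iff_continuousAt.2 fun z ↦ tendsto_lintegral_filter_of_dominated_convergence
    (fun _ ↦ f w) ?_ ?_ (by simpa using hf_top w) ?_
  · exact .of_forall fun y ↦ hf.measurable.comp (measurable_twoPoint_left ht y)
  · exact .of_forall fun y ↦ .of_forall fun ω ↦ hw (mem_univ _)
  · exact .of_forall fun ω ↦ (hf.comp (continuous_twoPoint t ω)).continuousAt

end TwoPoint

/-! ### Excessive functions of the two-point motion -/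

variable (S) in
/-- `f` is excessive for the two-point motion: along every trajectory, `f` is a
supermartingale. -/
def IsExcessive (f : UnitAddCircle × UnitAddCircle → ℝ≥0∞) : Prop :=
  ∀ t ∈ S.T, S.twoPointMean t f ≤ f

namespace IsExcessive

lemma setLIntegral_le (h : S.IsExcessive f) (hf : Measurable f) (hs : s ∈ S.T) (ht : t ∈ S.T)
    (hst : s ≤ t) {E : Set Ω} (hE : MeasurableSet[S.F s] E) :
    ∫⁻ ω in E, f (S.twoPoint t ω z) ∂S.P ≤ ∫⁻ ω in E, f (S.twoPoint s ω z) ∂S.P := by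
  have h_diff : t - s ∈ S.T := S.sub_mem hs ht hst
  calc ∫⁻ ω in E, f (S.twoPoint t ω z) ∂S.P
      = ∫⁻ ω in E, S.twoPointMean (t - s) f (S.twoPoint s ω z) ∂S.P := by
        rw [← setLIntegral_twoPoint_add hs h_diff hf hE, add_sub_cancel]
    _ ≤ ∫⁻ ω in E, f (S.twoPoint s ω z) ∂S.P := lintegral_mono fun ω ↦ h _ h_diff _

lemma twoPointMean_anti (h : S.IsExcessive f) (hf : Measurable f) (hs : s ∈ S.T) (ht : t ∈ S.T)
    (hst : s ≤ t) : S.twoPointMean t f ≤ S.twoPointMean s f := fun z ↦ by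
  simpa only [twoPointMean, setLIntegral_univ] using
    h.setLIntegral_le hf (z := z) hs ht hst .univ

lemma mul_measure_exists_gt_le (h : S.IsExcessive f) (hf : Measurable f)
    (hf_cont : ∀ t ω, ContinuousAt f (S.twoPoint t ω z)) (hs : s ∈ S.T) (c : ℝ≥0∞) :
    c * S.P {ω | ∃ t ∈ S.T, s ≤ t ∧ c < f (S.twoPoint t ω z)} ≤ S.twoPointMean s f z := by
  let ℱ : Filtration S.T m :=
    { seq t := S.F t
      mono' a b hab := S.F_mono a a.2 b b.2 hab
      le' a := S.F_le a a.2 }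
  let D : Set S.T := {t | (t : ℝ) ∈ S.ratTimes ∧ s ≤ t}
  have hD : D.Countable :=
    (S.countable_ratTimes.preimage Subtype.val_injective).mono fun t ht ↦ ht.1
  have h_countable := mul_measure_exists_countable_ge_le (ℱ := ℱ) (μ := S.P)
    (Y := fun t ω ↦ f (S.twoPoint t ω z)) (fun t ↦ hf.comp (measurable_twoPoint_left_F t.2 z))
    (fun a b hab E hE ↦ h.setLIntegral_le hf a.2 b.2 hab hE) c hD (s := ⟨s, hs⟩) fun t ht ↦ ht.2
  refine le_trans ?_ h_countable
  gcongr with ω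
  rintro ⟨t, ht, hst, htc⟩
  obtain ⟨u, hu, htu, huc⟩ := exists_ratTimes_twoPoint_mem ht ω
    ((hf_cont t ω).eventually (lt_mem_nhds htc))
  exact ⟨⟨u, hu.1⟩, ⟨hu, hst.trans htu⟩, le_of_lt huc⟩

lemma infTwoPointMean_le_twoPointMean (h : S.IsExcessive f) (hf : Continuous f)
    (hf_top : ∀ z, f z ≠ ∞) (ht : t ∈ S.T) :
    S.infTwoPointMean f z ≤ S.twoPointMean t (S.infTwoPointMean f) z := by
  have h_meas (k : ℕ) : Measurable fun ω ↦ S.twoPointMean k f (S.twoPoint t ω z) :=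
    (continuous_twoPointMean (S.natCast_mem k) hf hf_top).measurable.comp
      (measurable_twoPoint_left ht z)
  have h_anti : Antitone fun (k : ℕ) ω ↦ S.twoPointMean k f (S.twoPoint t ω z) :=
    fun i j hij ω ↦ h.twoPointMean_anti hf.measurable (S.natCast_mem i) (S.natCast_mem j)
      (Nat.cast_le.2 hij) _
  have h_add (k : ℕ) : ∫⁻ ω, S.twoPointMean k f (S.twoPoint t ω z) ∂S.P
      = S.twoPointMean (t + k) f z := by
    simpa only [twoPointMean.eq_1 _ (t + k), setLIntegral_univ] using
      (setLIntegral_twoPoint_add ht (S.natCast_mem k) hf.measurable .univ z).symm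
  have h_fin : ∫⁻ ω, S.twoPointMean (0 : ℕ) f (S.twoPoint t ω z) ∂S.P ≠ ∞ := by
    rw [h_add]
    exact ne_top_of_le_ne_top (hf_top z) (h _ (S.add_mem ht (S.natCast_mem 0)) z)
  simp only [infTwoPointMean, twoPointMean.eq_1 _ t]
  rw [lintegral_iInf h_meas h_anti h_fin]
  refine le_iInf fun k ↦ (h_add k).symm ▸ ?_
  obtain ⟨j, hj⟩ := exists_nat_ge (t + k)
  exact (iInf_le _ j).trans
    (h.twoPointMean_anti hf.measurable (S.add_mem ht (S.natCast_mem k)) (S.natCast_mem j) hj z)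

end IsExcessive

/-! ### Contractibility -/

lemma Contractible.exists_diagonal_mem (hS : S.Contractible)
    {Z : Set (UnitAddCircle × UnitAddCircle)} (hZ : IsClosed Z) (hZ_ne : Z.Nonempty)
    (h_inv : ∀ w ∈ Z, ∀ t ∈ S.T, ∀ᵐ ω ∂S.P, S.twoPoint t ω w ∈ Z) : ∃ x, (x, x) ∈ Z := by
  obtain ⟨⟨x, y⟩, hw, h_min⟩ :=
    hZ.isCompact.exists_isMinOn hZ_ne (continuous_dist.continuousOn (s := Z))
  obtain rfl | hxy := eq_or_ne x y
  · exact ⟨x, hw⟩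
  have h_rat : ∀ᵐ ω ∂S.P, ∀ t ∈ S.ratTimes, S.twoPoint t ω (x, y) ∈ Z :=
    (ae_ball_iff S.countable_ratTimes).2 fun t ht ↦ h_inv _ hw t ht.1
  refine absurd (measure_eq_zero_iff_ae_notMem.2 ?_) (hS x y hxy).ne'
  filter_upwards [h_rat] with ω hω
  rintro ⟨t, ht, h_lt⟩
  obtain ⟨u, hu, -, hu_notMem⟩ := exists_ratTimes_twoPoint_mem (z := (x, y)) ht ω
    (hZ.isOpen_compl.mem_nhds fun h_mem ↦ (h_min h_mem).not_gt h_lt)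
  exact hu_notMem (hω u hu)

lemma Contractible.infTwoPointMean_eq_zero (hS : S.Contractible) (h : S.IsExcessive f)
    (hf : Continuous f) (hf_top : ∀ z, f z ≠ ∞) (h_diag : ∀ x, f (x, x) = 0)
    (z : UnitAddCircle × UnitAddCircle) : S.infTwoPointMean f z = 0 := by
  let g := S.infTwoPointMean f
  have hg_le (w) : g w ≤ f w := (iInf_le _ 0).trans (h _ (S.natCast_mem 0) w)
  have hg_usc : UpperSemicontinuous g := upperSemicontinuous_iInf fun k ↦
    (continuous_twoPointMean (S.natCast_mem k) hf hf_top).upperSemicontinuous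
  obtain ⟨w₀, -, hw₀⟩ := (hg_usc.upperSemicontinuousOn univ).exists_isMaxOn univ_nonempty
    isCompact_univ
  have hg_max (w) : g w ≤ g w₀ := hw₀ (mem_univ w)
  have h_inv (w) (hw : g w₀ ≤ g w) (t) (ht : t ∈ S.T) :
      ∀ᵐ ω ∂S.P, g w₀ ≤ g (S.twoPoint t ω w) := by
    have h_ae := ae_eq_of_ae_le_of_lintegral_le (μ := S.P) (f := fun ω ↦ g (S.twoPoint t ω w))
      (g := fun _ ↦ g w₀) (.of_forall fun ω ↦ hg_max _) ?_ aemeasurable_const ?_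
    · exact h_ae.mono fun ω hω ↦ hω.ge
    · exact ne_top_of_le_ne_top (ne_top_of_le_ne_top (hf_top w₀) (hg_le w₀))
        ((lintegral_mono fun ω ↦ hg_max _).trans_eq (by simp))
    · rw [lintegral_const, measure_univ, mul_one]
      exact hw.trans (h.infTwoPointMean_le_twoPointMean hf hf_top ht)
  obtain ⟨x, hx⟩ := hS.exists_diagonal_mem (hg_usc.isClosed_preimage (g w₀))
    ⟨w₀, le_refl (g w₀)⟩ h_inv
  exact le_antisymm ((hg_max z).trans ((hx.trans (hg_le _)).trans_eq (h_diag x))) zero_le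

lemma Contractible.ae_tendsto_zero (hS : S.Contractible) (h : S.IsExcessive f)
    (hf : Continuous f) (hf_top : ∀ z, f z ≠ ∞) (h_diag : ∀ x, f (x, x) = 0)
    (z : UnitAddCircle × UnitAddCircle) :
    ∀ᵐ ω ∂S.P, Tendsto (fun t ↦ f (S.twoPoint t ω z)) S.tFilter (𝓝 0) := by
  have h_null (n : ℕ) : S.P {ω | ∀ k : ℕ, ∃ t ∈ S.T, k ≤ t ∧
      (n : ℝ≥0∞)⁻¹ < f (S.twoPoint t ω z)} = 0 := by
    have h_le : (n : ℝ≥0∞)⁻¹ * S.P {ω | ∀ k : ℕ, ∃ t ∈ S.T, k ≤ t ∧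
        (n : ℝ≥0∞)⁻¹ < f (S.twoPoint t ω z)} ≤ S.infTwoPointMean f z := by
      refine le_iInf fun k ↦ le_trans ?_ (h.mul_measure_exists_gt_le hf.measurable
        (fun _ _ ↦ hf.continuousAt) (S.natCast_mem k) (n : ℝ≥0∞)⁻¹)
      gcongr with ω
      exact fun hω ↦ hω k
    rw [hS.infTwoPointMean_eq_zero h hf hf_top h_diag, nonpos_iff_eq_zero, mul_eq_zero] at h_le
    exact h_le.resolve_left (by simp)
  filter_upwards [ae_all_iff.2 fun n ↦ measure_eq_zero_iff_ae_notMem.1 (h_null n)] with ω hω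
  refine ENNReal.tendsto_nhds_zero.2 fun ε hε ↦ S.eventually_tFilter_iff.2 ?_
  obtain ⟨n, hn⟩ := ENNReal.exists_inv_nat_lt hε.ne'
  obtain ⟨k, hk⟩ := not_forall.1 (hω n)
  exact ⟨k, fun t ht hkt ↦ (not_lt.1 fun h_lt ↦ hk ⟨t, ht, hkt, h_lt⟩).trans hn.le⟩

end RDS

namespace RDS

variable {Ω : Type} [m : MeasurableSpace Ω] {S : RDS Ω} {t : ℝ}

/-! ### Reverse-minimality -/

lemma forwardInvariant_compl_singleton_iff {p : UnitAddCircle} :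
    S.ForwardInvariant {p}ᶜ ↔ S.DetFixedPoint p := by
  simp only [ForwardInvariant, DetFixedPoint, image_compl_eq (Homeomorph.bijective _),
    image_singleton, compl_subset_compl, singleton_subset_singleton, eq_comm]

lemma ReverseMinimal.infinite_of_forwardInvariant_compl (hS : S.ReverseMinimal)
    {B : Set UnitAddCircle} (hB_ne : B.Nonempty) (hB : IsClosed B)
    (h_inv : S.ForwardInvariant Bᶜ) : B.Infinite := by
  have h_univ : B = univ := by
    simpa only [compl_empty_iff, compl_univ_iff, hB_ne.ne_empty, or_false] using
      hS Bᶜ hB.isOpen_compl h_inv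
  rw [h_univ]
  have : Infinite (Ico (0 : ℝ) (0 + 1)) := (Ico_infinite (by norm_num)).to_subtype
  exact infinite_univ_iff.2 ((AddCircle.equivIco (1 : ℝ) 0).infinite_iff.2 this)

lemma ReverseMinimal.not_detFixedPoint (hS : S.ReverseMinimal) (p : UnitAddCircle) :
    ¬ S.DetFixedPoint p := fun hp ↦
  hS.infinite_of_forwardInvariant_compl (singleton_nonempty p) isClosed_singleton
    (forwardInvariant_compl_singleton_iff.2 hp) (finite_singleton p)

lemma measurable_measure_image {ρ : Measure UnitAddCircle} [SFinite ρ] (ht : t ∈ S.T)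
    {A : Set UnitAddCircle} (hA : MeasurableSet A) : Measurable fun ω ↦ ρ (S.φ t ω '' A) := by
  simp only [Homeomorph.image_eq_preimage_symm]
  exact measurable_measure_prodMk_left (measurable_symm ht hA)

namespace ReverseStationary

variable {ρ : Measure UnitAddCircle}

lemma twoPointMean_arcMass (hρ : S.ReverseStationary ρ) (ht : t ∈ S.T) :
    S.twoPointMean t (arcMass ρ) = arcMass ρ := by
  ext z
  rw [arcMass, hρ t ht _ (isOpen_arc _ _).measurableSet, twoPointMean]
  simp only [(S.φ_orient t ht _).image_arc, arcMass, twoPoint]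

lemma isExcessive_arcMass (hρ : S.ReverseStationary ρ) : S.IsExcessive (arcMass ρ) :=
  fun _ ht ↦ (hρ.twoPointMean_arcMass ht).le

lemma isExcessive_minMass (hρ : S.ReverseStationary ρ) : S.IsExcessive (minMass ρ) :=
  fun t ht z ↦ le_min
    ((lintegral_mono fun _ ↦ min_le_left _ _).trans (hρ.isExcessive_arcMass t ht z))
    ((lintegral_mono fun _ ↦ min_le_right _ _).trans (hρ.isExcessive_arcMass t ht z.swap))

variable [IsProbabilityMeasure ρ]

lemma isOpenPosMeasure (hρ : S.ReverseStationary ρ) (hS : S.ReverseMinimal) :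
    ρ.IsOpenPosMeasure := by
  have h_open : IsOpen ρ.supportᶜ := Measure.isOpen_compl_support
  have h_inv : S.ForwardInvariant ρ.supportᶜ := by
    refine S.forwardInvariant_of_forall_ae h_open fun t ht ↦ ?_
    have h_mean := hρ t ht ρ.supportᶜ h_open.measurableSet
    rw [Measure.measure_compl_support, eq_comm,
      lintegral_eq_zero_iff (measurable_measure_image ht h_open.measurableSet)] at h_mean
    filter_upwards [h_mean] with ω hω
    exact Measure.subset_compl_support_of_isOpen ((S.φ t ω).isOpenMap _ h_open) hω
  rcases hS _ h_open h_inv with h | h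
  · refine ⟨fun U hU ⟨x, hx⟩ ↦ ?_⟩
    have hx_supp : x ∈ ρ.support := compl_empty_iff.1 h ▸ mem_univ x
    exact ((Measure.mem_support_iff_forall x).1 hx_supp U (hU.mem_nhds hx)).ne'
  · have h_null := ρ.measure_compl_support
    rw [h, measure_univ] at h_null
    exact absurd h_null one_ne_zero

lemma ae_measure_singleton_eq (hρ : S.ReverseStationary ρ) (ht : t ∈ S.T) {x : UnitAddCircle}
    (h_max : ∀ y, ρ {y} ≤ ρ {x}) : ∀ᵐ ω ∂S.P, ρ {S.φ t ω x} = ρ {x} := by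
  have h_mean := hρ t ht {x} (measurableSet_singleton x)
  simp only [image_singleton] at h_mean
  refine ae_eq_of_ae_le_of_lintegral_le (.of_forall fun ω ↦ h_max _) ?_ aemeasurable_const ?_
  · exact h_mean ▸ measure_ne_top ρ _
  · rw [lintegral_const, measure_univ, mul_one, ← h_mean]

lemma nullSingletonClass (hρ : S.ReverseStationary ρ) (hS : S.ReverseMinimal) :
    NullSingletonClass ρ := by
  refine ⟨fun x ↦ by_contra fun hx ↦ ?_⟩
  obtain ⟨y, hy, h_max⟩ := exists_forall_measure_singleton_le ρ (pos_iff_ne_zero.2 hx)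
  let B : Set UnitAddCircle := {z | ρ {y} ≤ ρ {z}}
  have hB : B.Finite := finite_setOf_le_measure_singleton ρ hy
  have h_inv : S.ForwardInvariant Bᶜ := by
    refine S.forwardInvariant_of_forall_ae hB.isClosed.isOpen_compl fun t ht ↦ ?_
    have h_maps : ∀ᵐ ω ∂S.P, ∀ z ∈ B, S.φ t ω z ∈ B := by
      refine (ae_ball_iff hB.countable).2 fun z hz ↦ ?_
      filter_upwards [hρ.ae_measure_singleton_eq ht fun w ↦ (h_max w).trans hz] with ω hω
      exact hz.trans hω.ge
    filter_upwards [h_maps] with ω hω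
    have h_image : S.φ t ω '' B = B := eq_of_subset_of_ncard_le (image_subset_iff.2 hω)
      (ncard_image_of_injective _ (S.φ t ω).injective).ge hB
    rw [image_compl_eq (S.φ t ω).bijective, h_image]
  exact hS.infinite_of_forwardInvariant_compl ⟨y, le_refl (ρ {y})⟩ hB.isClosed h_inv hB

end ReverseStationary

lemma ReverseMinimal.exists_reverseStationary (hS : S.ReverseMinimal) :
    ∃ ρ : Measure UnitAddCircle, IsProbabilityMeasure ρ ∧ NullSingletonClass ρ ∧
      ρ.IsOpenPosMeasure ∧ S.ReverseStationary ρ := by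
  obtain ⟨ρ, hρ_prob, hρ⟩ := S.exists_reverseStationary
  exact ⟨ρ, hρ_prob, hρ.nullSingletonClass hS, hρ.isOpenPosMeasure hS, hρ⟩

/-! ### Consequences of contractibility and reverse-minimality -/

section ReverseStationary

variable {ρ : Measure UnitAddCircle} [IsProbabilityMeasure ρ]
  {a b x y : UnitAddCircle}

lemma ReverseStationary.infTwoPointMean_minMass_pos [ρ.IsOpenPosMeasure]
    (hρ : S.ReverseStationary ρ) (hxy : x ≠ y)
    (h : ∀ᵐ ω ∂S.P, ∀ t ∈ S.T, dPlus x y ≤ dPlus (S.φ t ω x) (S.φ t ω y)) :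
    0 < S.infTwoPointMean (minMass ρ) (x, y) := by
  obtain ⟨δ, hδ, h_big⟩ := exists_forall_le_arcMass ρ (dPlus_pos hxy)
  have h_pos : 0 < min δ 1 * arcMass ρ (y, x) :=
    ENNReal.mul_pos (lt_min hδ one_pos).ne' (arcMass_pos ρ hxy.symm).ne'
  refine h_pos.trans_le (le_iInf fun k ↦ ?_)
  have hk := S.natCast_mem k
  rw [← hρ.twoPointMean_arcMass hk]
  refine (lintegral_const_mul_le _ _).trans (lintegral_mono_ae ?_)
  filter_upwards [h] with ω hω
  refine le_min ?_ (mul_le_of_le_one_left' (min_le_right _ _))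
  calc min δ 1 * arcMass ρ (S.twoPoint k ω (y, x)) ≤ δ * 1 :=
        mul_le_mul' (min_le_left _ _) prob_le_one
    _ ≤ arcMass ρ (S.twoPoint k ω (x, y)) := (mul_one δ).trans_le (h_big _ (hω k hk))

variable [NullSingletonClass ρ]

lemma ReverseStationary.infTwoPointMean_minMass_eq_zero (hρ : S.ReverseStationary ρ)
    (hS : S.Contractible) (z : UnitAddCircle × UnitAddCircle) :
    S.infTwoPointMean (minMass ρ) z = 0 :=
  hS.infTwoPointMean_eq_zero hρ.isExcessive_minMass (continuous_minMass ρ)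
    (fun z ↦ ne_top_of_le_ne_top one_ne_top (minMass_le_one ρ z)) (minMass_self ρ) z

lemma ReverseStationary.ae_tendsto_minMass (hρ : S.ReverseStationary ρ) (hS : S.Contractible)
    (z : UnitAddCircle × UnitAddCircle) :
    ∀ᵐ ω ∂S.P, Tendsto (fun t ↦ minMass ρ (S.twoPoint t ω z)) S.tFilter (𝓝 0) :=
  hS.ae_tendsto_zero hρ.isExcessive_minMass (continuous_minMass ρ)
    (fun z ↦ ne_top_of_le_ne_top one_ne_top (minMass_le_one ρ z)) (minMass_self ρ) z

variable [ρ.IsOpenPosMeasure]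

lemma ReverseStationary.ae_tendsto_dist (hρ : S.ReverseStationary ρ) (hS : S.Contractible)
    (x y : UnitAddCircle) :
    ∀ᵐ ω ∂S.P, Tendsto (fun t ↦ dist (S.φ t ω x) (S.φ t ω y)) S.tFilter (𝓝 0) := by
  filter_upwards [hρ.ae_tendsto_minMass hS (x, y)] with ω hω
  refine tendsto_order.2 ⟨fun ε hε ↦ .of_forall fun t ↦ hε.trans_le dist_nonneg, fun ε hε ↦ ?_⟩
  obtain ⟨δ, hδ, h_close⟩ := exists_forall_dist_lt_of_minMass_lt ρ hε
  have h_small : ∀ᶠ t in S.tFilter, minMass ρ (S.twoPoint t ω (x, y)) < δ :=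
    hω.eventually_lt_const hδ
  exact h_small.mono fun t ht ↦ h_close (S.twoPoint t ω (x, y)) ht

lemma ReverseStationary.ae_tendsto_volume_arc (hρ : S.ReverseStationary ρ) (hS : S.Contractible)
    (hab : a ≠ b) :
    ∀ᵐ ω ∂S.P, (∀ t ∈ S.T, arcMass ρ (S.twoPoint t ω (a, b)) ≤ 2⁻¹) →
      Tendsto (fun t ↦ volume (S.φ t ω '' arc a b)) S.tFilter (𝓝 0) := by
  filter_upwards [hρ.ae_tendsto_minMass hS (a, b)] with ω hω h_half
  have h_mem : ∀ᶠ t in S.tFilter, t ∈ S.T := mem_inf_of_right (mem_principal_self S.T)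
  have h_arcMass : Tendsto (fun t ↦ arcMass ρ (S.twoPoint t ω (a, b))) S.tFilter (𝓝 0) := by
    refine hω.congr' ?_
    filter_upwards [h_mem] with t ht
    exact minMass_eq_arcMass ρ ((S.φ t ω).injective.ne hab) (h_half t ht)
  refine (tendsto_volume_arc_of_tendsto_arcMass ρ h_arcMass).congr' ?_
  filter_upwards [h_mem] with t ht
  rw [(S.φ_orient t ht ω).image_arc]
  rfl

lemma ReverseStationary.mul_measure_not_tendsto_volume_arc_le (hρ : S.ReverseStationary ρ)
    (hS : S.Contractible) (hab : a ≠ b) :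
    2⁻¹ * S.P {ω | ¬ Tendsto (fun t ↦ volume (S.φ t ω '' arc a b)) S.tFilter (𝓝 0)}
      ≤ arcMass ρ (a, b) := by
  have h_maximal := hρ.isExcessive_arcMass.mul_measure_exists_gt_le (measurable_arcMass ρ)
    (z := (a, b)) (fun t ω ↦ continuousAt_arcMass ρ ((S.φ t ω).injective.ne hab)) S.zero_mem 2⁻¹
  rw [hρ.twoPointMean_arcMass S.zero_mem] at h_maximal
  refine (mul_le_mul_right (measure_mono_ae ?_) _).trans h_maximal
  filter_upwards [hρ.ae_tendsto_volume_arc hS hab] with ω hω h_bad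
  by_contra h_good
  exact h_bad (hω fun t ht ↦ not_lt.1 fun h_lt ↦ h_good ⟨t, ht, S.nonneg_of_mem ht, h_lt⟩)

lemma ReverseStationary.ae_exists_tendsto_volume (hρ : S.ReverseStationary ρ)
    (hS : S.Contractible) (x : UnitAddCircle) :
    ∀ᵐ ω ∂S.P, ∃ U : Set UnitAddCircle, IsOpen U ∧ x ∈ U ∧
      Tendsto (fun t ↦ volume (S.φ t ω '' U)) S.tFilter (𝓝 0) := by
  have h_half : 2⁻¹ * S.P {ω | ¬ ∃ U : Set UnitAddCircle, IsOpen U ∧ x ∈ U ∧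
      Tendsto (fun t ↦ volume (S.φ t ω '' U)) S.tFilter (𝓝 0)} ≤ 0 := by
    refine le_of_forall_gt_imp_ge_of_dense fun δ hδ ↦ ?_
    obtain ⟨ε, hε, h_small⟩ := exists_forall_arcMass_lt ρ hδ
    obtain ⟨r, hr₀, hr⟩ := exists_between (lt_min (half_pos hε) one_half_pos)
    obtain ⟨hrε, hr⟩ := lt_min_iff.1 hr
    have h_length := dPlus_sub_add hr₀.le hr x
    have h_ne : x - r ≠ x + r := fun h_eq ↦ by
      rw [h_eq, dPlus_self] at h_length
      linarith
    have hx : x ∈ arc (x - r) (x + r) := by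
      rw [arc_sub_add hr₀.le hr]
      exact Metric.mem_ball_self hr₀
    calc _ ≤ 2⁻¹ * S.P {ω | ¬ Tendsto (fun t ↦ volume (S.φ t ω '' arc (x - r) (x + r)))
            S.tFilter (𝓝 0)} := by
          gcongr with ω
          exact fun h_lim ↦ ⟨_, isOpen_arc _ _, hx, h_lim⟩
      _ ≤ arcMass ρ (x - r, x + r) := hρ.mul_measure_not_tendsto_volume_arc_le hS h_ne
      _ ≤ δ := (h_small _ (by rw [h_length]; linarith)).le
  rw [nonpos_iff_eq_zero, mul_eq_zero] at h_half
  exact h_half.resolve_left (by simp)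

end ReverseStationary

lemma Contractible.synchronising (hS : S.Contractible) (hS' : S.ReverseMinimal) :
    S.Synchronising := fun x y ↦ by
  obtain ⟨ρ, _, _, _, hρ⟩ := hS'.exists_reverseStationary
  exact (measure_congr (eventuallyEq_univ.2 (hρ.ae_tendsto_dist hS x y))).trans measure_univ

lemma Contractible.everywhereLocallyStable (hS : S.Contractible) (hS' : S.ReverseMinimal) :
    S.EverywhereLocallyStable := fun x ↦ by
  obtain ⟨ρ, _, _, _, hρ⟩ := hS'.exists_reverseStationary
  exact (measure_congr (eventuallyEq_univ.2 (hρ.ae_exists_tendsto_volume hS x))).trans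
    measure_univ

lemma Contractible.compressible (hS : S.Contractible) (hS' : S.ReverseMinimal) :
    S.Compressible := fun x y hxy ↦ by
  obtain ⟨ρ, _, _, _, hρ⟩ := hS'.exists_reverseStationary
  refine pos_iff_ne_zero.2 fun h_null ↦ ?_
  refine (hρ.infTwoPointMean_minMass_pos hxy ?_).ne'
    (hρ.infTwoPointMean_minMass_eq_zero hS (x, y))
  simpa using measure_eq_zero_iff_ae_notMem.1 h_null

/-! ### Consequences of compressibility -/

lemma Compressible.contractible (hS : S.Compressible) : S.Contractible := by
  have h_oriented (x y : UnitAddCircle) (hxy : x ≠ y) (h_dist : dist x y = dPlus x y) :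
      0 < S.P {ω | ∃ t ∈ S.T, dist (S.φ t ω x) (S.φ t ω y) < dist x y} := by
    refine (hS x y hxy).trans_le (measure_mono ?_)
    rintro ω ⟨t, ht, h_lt⟩
    exact ⟨t, ht, h_dist ▸ (dist_le_dPlus _ _).trans_lt h_lt⟩
  intro x y hxy
  have h_min := dist_eq_min_dPlus x y
  rw [← dPlus_swap hxy] at h_min
  rcases min_choice (dPlus x y) (dPlus y x) with h | h
  · exact h_oriented x y hxy (h_min.trans h)
  · simpa only [dist_comm] using h_oriented y x hxy.symm ((dist_comm y x).trans (h_min.trans h))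

lemma Compressible.subsingleton_compl (hS : S.Compressible) {A : Set UnitAddCircle}
    (hA : IsOpen A) (hA_ne : A.Nonempty) (h_inv : S.ForwardInvariant A) : Aᶜ.Subsingleton := by
  refine not_nontrivial_iff.1 fun hA_compl ↦ ?_
  obtain ⟨x, y, hxy, h_arc, h_max⟩ := exists_maximal_arc_subset hA hA_ne hA_compl
  refine (hS y x hxy.symm).ne' (measure_eq_zero_iff_ae_notMem.2 ?_)
  filter_upwards [h_inv] with ω hω
  rintro ⟨t, ht, h_lt⟩
  have h_le : dPlus (S.φ t ω x) (S.φ t ω y) ≤ dPlus x y := by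
    refine h_max _ _ ?_
    rw [← (S.φ_orient t ht ω).image_arc]
    exact (image_mono h_arc).trans (hω t ht)
  rw [dPlus_swap hxy, dPlus_swap ((S.φ t ω).injective.ne hxy)] at h_lt
  linarith

lemma Compressible.reverseMinimal (hS : S.Compressible) (h_fix : ∀ p, ¬ S.DetFixedPoint p) :
    S.ReverseMinimal := by
  intro A hA h_inv
  rcases A.eq_empty_or_nonempty with rfl | hA_ne
  · exact .inl rfl
  rcases (hS.subsingleton_compl hA hA_ne h_inv).eq_empty_or_singleton with h | ⟨p, hp⟩
  · exact .inr (compl_empty_iff.1 h)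
  · rw [← compl_compl A, hp] at h_inv
    exact absurd (forwardInvariant_compl_singleton_iff.1 h_inv) (h_fix p)

end RDS

/-- `φ` compressible with no deterministic fixed points iff `φ` contractible with
reverse-minimal dynamics; and in these cases `φ` is stably synchronising. -/
theorem compressible_iff_contractible_reverseMinimal_and_stablySynchronising
    {Ω : Type} [MeasurableSpace Ω] (S : RDS Ω) :
    ((S.Compressible ∧ ∀ p : UnitAddCircle, ¬ S.DetFixedPoint p) ↔
      (S.Contractible ∧ S.ReverseMinimal)) ∧
    ((S.Compressible ∧ ∀ p : UnitAddCircle, ¬ S.DetFixedPoint p) →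
      S.StablySynchronising) := by
  have forward (h : S.Compressible ∧ ∀ p : UnitAddCircle, ¬ S.DetFixedPoint p) :
      S.Contractible ∧ S.ReverseMinimal := ⟨h.1.contractible, h.1.reverseMinimal h.2⟩
  have backward (h : S.Contractible ∧ S.ReverseMinimal) :
      S.Compressible ∧ ∀ p : UnitAddCircle, ¬ S.DetFixedPoint p :=
    ⟨h.1.compressible h.2, h.2.not_detFixedPoint⟩
  refine ⟨⟨forward, backward⟩, fun h ↦ ?_⟩
  obtain ⟨h_contr, h_min⟩ := forward h
  exact ⟨h_contr.synchronising h_min, h_contr.everywhereLocallyStable h_min⟩
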